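/- The codewords of minimum weight (weight s+1) of the p-ary code of points and lines of a translation generalised quadrangle T(E) of order (s,t) = (q^n, q^m), q = p^h with p prime, are exactly the nonzero scalar multiples of the incidence vectors of the lines of T(E). -/

import Mathlib

/-!
Write `q = |K|`. After the choice of an origin outside the hyperplane `H`, the affine points are the
vectors of `V = H`; the other points are the cosets of the tangent spaces `T i` and one point
`(∞)`; the lines are the cosets `y + E i` together with `y + T i`, and for each `i` the set of all
cosets of `T i` together with `(∞)`.

Every codeword `c` satisfies three families of linear conditions, since the lines do
(`PointModel.Balanced`). They involve the sum `a i` of the coefficients of the affine lines in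
direction `E i`. The sum of `c` over an affine `(n + m)`-flat with direction `U` is the sum of the
`a i` with `E i ⊓ U = 0`; the sum over a transversal `E k` of the cosets of `T i` is `a i`; and the
sum over the points collinear with an affine point `x`, where `x` counts `q ^ m + 1` times, is the
total `B = ∑ i, a i + c (∞)`. The last condition expresses the defining property of generalised
quadrangles. These conditions suffice to determine the vectors of weight `q ^ n + 1`.

If the sum of `c` over an affine line `L` is not `B`, each affine point of `L` is collinear with a
point of the support off `L`. As there are no triangles, these are `q ^ n` distinct points, none of
which is collinear with the point of `L` at infinity, so at most one point of the support is
collinear with that point (`Balanced.subsingleton_perp`). If `B = 0`, it follows that the sums over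
all affine lines vanish, so that each of the `q ^ m + 1` lines through an affine point of the support
has a further point of the support, which is too many; so `B ≠ 0` (`Balanced.total_ne_zero`).

Suppose that some `a i` is not zero. Then not all flat sums vanish (`Balanced.coeff_eq_zero`). When
the sum for the direction `U` is not zero, each of the `q ^ n` translates of `U` contains a point of
the support, so it contains exactly one, and there is only one other point (`Balanced.transversal`).
Applied to every complement `U` of `E i`, this forces the affine part of the support to be a coset of
`E i`, and `c` to be a multiple of an affine line (`Balanced.isAffineLine_of_flat`). Suppose that all
`a i` vanish. Then `c (∞) = B ≠ 0`, and an affine point of the support is impossible: the support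
would lie, except for `(∞)`, in a translate of `T i ⊓ T j` for some `i ≠ j`, and a complementary flat
would meet it in one point only, although flat sums vanish. So the support is a line through `(∞)`
(`Balanced.isLineAtInfinity`).
-/


attribute [local instance] Classical.propDecidable

/-! ### Eggs and the points of the generalised quadrangle in affine coordinates -/

open Module in
/-- The affine data of an egg: `V` is the vector space of translations of the affine space
`Π \ H∞` (isomorphic to the hyperplane `H` itself), `E i` are the egg elements and `T i` their
tangent spaces, as subspaces of `V`. -/
structure EggDatum (K V ι : Type*) [Field K] [Fintype K] [AddCommGroup V] [Module K V]
    [Fintype ι] (n m : ℕ) where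
  E : ι → Submodule K V
  T : ι → Submodule K V
  one_le_n : 1 ≤ n
  one_le_m : 1 ≤ m
  card_index : Fintype.card ι = Fintype.card K ^ m + 1
  finrank_V : finrank K V = 2 * n + m
  finrank_E : ∀ i, finrank K (E i) = n
  finrank_T : ∀ i, finrank K (T i) = n + m
  E_le_T : ∀ i, E i ≤ T i
  disjoint_T : ∀ i j, j ≠ i → Disjoint (E j) (T i)
  indep : ∀ i j k, i ≠ j → i ≠ k → j ≠ k → Disjoint (E i) (E j ⊔ E k)

/-- The point set of `T(E)`, presented by its three kinds of points: `pa v` is the affine point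
`v`, `pw i v` is the subspace spanned by the tangent space `T i` and the affine point `v`, and
`pinf` is the point `(∞)`. -/
structure PointModel {K V ι : Type*} [Field K] [Fintype K] [AddCommGroup V] [Module K V]
    [Fintype ι] {n m : ℕ} (D : EggDatum K V ι n m) (X : Type*) where
  pa : V → X
  pw : ι → V → X
  pinf : X
  pa_inj : Function.Injective pa
  pw_eq : ∀ i j v w, pw i v = pw j w ↔ i = j ∧ v - w ∈ D.T i
  pa_ne_pw : ∀ v i w, pa v ≠ pw i w
  pa_ne_pinf : ∀ v, pa v ≠ pinf
  pw_ne_pinf : ∀ i v, pw i v ≠ pinf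
  cover : ∀ P, (∃ v, P = pa v) ∨ (∃ i v, P = pw i v) ∨ P = pinf

namespace EggDatum

set_option linter.unusedSectionVars false

open Module

variable {K V ι : Type*} [Field K] [Fintype K] [AddCommGroup V] [Module K V] [Fintype V]
  [Fintype ι] {n m : ℕ} (D : EggDatum K V ι n m)

include D in
lemma two_le_card : 2 ≤ Fintype.card K := Fintype.one_lt_card

lemma card_E (i : ι) : Fintype.card (D.E i) = Fintype.card K ^ n := by
  rw [Module.card_eq_pow_finrank (K := K), D.finrank_E]

lemma E_ne_bot (i : ι) : D.E i ≠ ⊥ := by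
  intro h
  have := D.finrank_E i
  rw [h, finrank_bot] at this
  have := D.one_le_n
  omega

lemma disjoint_E {i j : ι} (h : i ≠ j) : Disjoint (D.E i) (D.E j) :=
  (D.disjoint_T j i h).mono_right (D.E_le_T j)

lemma isCompl_of_disjoint {U W : Submodule K V} (hd : Disjoint U W)
    (h : finrank K U + finrank K W = 2 * n + m) (D : EggDatum K V ι n m) : IsCompl U W := by
  refine ⟨hd, ?_⟩
  rw [codisjoint_iff]
  apply Submodule.eq_top_of_finrank_eq
  have := Submodule.finrank_sup_add_finrank_inf_eq U W
  rw [hd.eq_bot, finrank_bot] at this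
  rw [D.finrank_V]; omega

lemma isCompl_T {i j : ι} (h : j ≠ i) : IsCompl (D.E j) (D.T i) :=
  isCompl_of_disjoint (D.disjoint_T i j h)
    (by rw [D.finrank_E, D.finrank_T]; omega) D

include D in
lemma three_le_card : 3 ≤ Fintype.card ι := by
  rw [D.card_index]
  have := D.two_le_card
  have := Nat.pow_le_pow_left this m
  have h2 : 2 ^ 1 ≤ 2 ^ m := Nat.pow_le_pow_right (by norm_num) D.one_le_m
  omega

include D in
lemma exists_index_ne (l : ι) : ∃ k : ι, k ≠ l := by
  have := D.three_le_card
  have : Nontrivial ι := Fintype.one_lt_card_iff_nontrivial.1 (by omega)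
  exact exists_ne l

lemma finrank_sup {U W : Submodule K V} (hd : Disjoint U W) :
    finrank K ↥(U ⊔ W) = finrank K U + finrank K W := by
  have := Submodule.finrank_sup_add_finrank_inf_eq U W
  rw [hd.eq_bot, finrank_bot] at this
  omega

include D in
lemma n_le_m : n ≤ m := by
  obtain ⟨i, j, k, hij, hik, hjk⟩ := Fintype.two_lt_card_iff.1 D.three_le_card
  have h1 := finrank_sup (D.indep i j k hij hik hjk)
  have h2 := finrank_sup (D.disjoint_E hjk)
  have h3 := Submodule.finrank_le (D.E i ⊔ (D.E j ⊔ D.E k))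
  rw [D.finrank_V] at h3
  rw [D.finrank_E] at *
  rw [D.finrank_E] at *
  omega

/-- Every vector outside the tangent space at `E j` lies in `E i ⊔ E j` for some `i ≠ j`; this is
the existence half of the generalised quadrangle property, and follows by counting since the
subspaces `E i ⊔ E j` meet pairwise only in `E j`. -/
lemma exists_mem_sup (j : ι) {d : V} (hd : d ∉ D.T j) : ∃ i, i ≠ j ∧ d ∈ D.E i ⊔ D.E j := by
  let Φ : (Σ i : {i // i ≠ j}, {u : D.E i // u ≠ 0} × D.E j) → {v // v ∉ D.T j} := fun x =>
    ⟨x.2.1.1 + x.2.2, by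
      intro h
      have h1 : (x.2.1.1 : V) ∈ D.T j := by
        simpa using (D.T j).sub_mem h (D.E_le_T j x.2.2.2)
      have := Submodule.disjoint_def.1 (D.disjoint_T j x.1 x.1.2) _ x.2.1.1.2 h1
      exact x.2.1.2 (Subtype.ext this)⟩
  have hinj : Function.Injective Φ := by
    rintro ⟨⟨i, hi⟩, ⟨u, hu⟩, e⟩ ⟨⟨i', hi'⟩, ⟨u', hu'⟩, e'⟩ h
    have h : (u : V) + e = u' + e' := congrArg Subtype.val h
    by_cases hii : i = i'
    · subst hii
      have h1 : (u : V) - u' = e' - e := by grind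
      have h2 := Submodule.disjoint_def.1 (D.disjoint_E hi) ((u : V) - u')
        (sub_mem u.2 u'.2) (h1 ▸ sub_mem e'.2 e.2)
      have h3 : u = u' := Subtype.ext (sub_eq_zero.1 h2)
      subst h3
      have h4 : e = e' := Subtype.ext (add_left_cancel h)
      subst h4
      rfl
    · exfalso
      have h1 : (u : V) = u' + (e' - e) := by grind
      have h2 := Submodule.disjoint_def.1 (D.indep i i' j hii hi hi') (u : V) u.2
        (h1 ▸ Submodule.add_mem_sup u'.2 (sub_mem e'.2 e.2))
      exact hu (Subtype.ext h2)
  have hcard : Nat.card {v // v ∉ D.T j} ≤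
      Nat.card (Σ i : {i // i ≠ j}, {u : D.E i // u ≠ 0} × D.E j) := by
    have h1 : ∀ i : {i // i ≠ j}, Fintype.card ({u : D.E i // u ≠ 0} × D.E j) =
        (Fintype.card K ^ n - 1) * Fintype.card K ^ n := by
      intro i
      rw [Fintype.card_prod, Fintype.card_subtype_compl, D.card_E, D.card_E]
      simp
    rw [Nat.card_eq_fintype_card, Nat.card_eq_fintype_card, Fintype.card_sigma,
      Finset.sum_congr rfl (fun i _ => h1 i), Finset.sum_const, Finset.card_univ,
      Fintype.card_subtype_compl, Fintype.card_subtype_compl, D.card_index,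
      Module.card_eq_pow_finrank (K := K) (V := V), D.finrank_V]
    have h2 : Fintype.card {v // v ∈ D.T j} = Fintype.card K ^ (n + m) := by
      rw [← D.finrank_T j]; exact Module.card_eq_pow_finrank (K := K) (V := D.T j)
    rw [h2]
    simp only [Fintype.card_unique, Nat.add_sub_cancel, smul_eq_mul]
    have h3 : 1 ≤ Fintype.card K ^ n := Nat.one_le_pow _ _ Fintype.card_pos
    obtain ⟨a, ha⟩ := Nat.exists_eq_add_of_le h3
    rw [pow_add, pow_add, two_mul, pow_add, ha]
    simp only [Nat.add_sub_cancel_left]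
    apply le_of_eq
    rw [Nat.sub_eq_iff_eq_add (by nlinarith [Nat.zero_le (a * (Fintype.card K ^ m)), Nat.zero_le (a * a * (Fintype.card K ^ m))])]
    ring
  obtain ⟨⟨i, u, e⟩, h⟩ := (hinj.bijective_of_nat_card_le hcard).2 ⟨d, hd⟩
  refine ⟨i, i.2, ?_⟩
  have : (u.1 : V) + e = d := congrArg Subtype.val h
  rw [← this]
  exact Submodule.add_mem_sup u.1.2 e.2

section Sums

variable {F : Type*} [Field F] (hq : (Fintype.card K : F) = 0)

/-- If `U` and `W` are disjoint, `x + U` meets `y + W` at most once, and exactly when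
`x - y ∈ U ⊔ W`. -/
lemma sum_disjoint {U W : Submodule K V} (h : Disjoint U W) (x y : V) (a : F) :
    ∑ u : U, (if x + u - y ∈ W then a else 0) = if x - y ∈ U ⊔ W then a else 0 := by
  by_cases hm : x - y ∈ U ⊔ W
  · rw [if_pos hm]
    obtain ⟨u, hu, w, hw, huw⟩ := Submodule.mem_sup.1 hm
    rw [Finset.sum_eq_single (-⟨u, hu⟩)]
    · rw [if_pos]
      have : x + ((-⟨u, hu⟩ : U) : V) - y = w := by
        push_cast; grind
      rw [this]; exact hw
    · intro b _ hb
      rw [if_neg]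
      intro hmem
      apply hb
      have h1 : ((b + ⟨u, hu⟩ : U) : V) ∈ W := by
        have : ((b + ⟨u, hu⟩ : U) : V) = (x + b - y) - w := by
          push_cast; grind
        rw [this]; exact sub_mem hmem hw
      have := Submodule.disjoint_def.1 h _ (b + ⟨u, hu⟩).2 h1
      exact eq_neg_of_add_eq_zero_left (Subtype.ext this)
    · simp
  · rw [if_neg hm]
    refine Finset.sum_eq_zero fun u _ => if_neg fun hmem => hm ?_
    have : x - y = ((-u : U) : V) + (x + u - y) := by push_cast; abel
    rw [this]
    exact Submodule.add_mem_sup (-u).2 hmem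

/-- A complement of `W` meets every coset of `W` exactly once. -/
lemma sum_isCompl {U W : Submodule K V} (h : IsCompl U W) (x y : V) (a : F) :
    ∑ u : U, (if x + u - y ∈ W then a else 0) = a := by
  rw [sum_disjoint h.disjoint, h.sup_eq_top, if_pos Submodule.mem_top]

include hq in
/-- If `U ⊓ W ≠ ⊥`, each coset of `W` meets `U` in `0` points or in a power of `q` greater than
`1`, hence in `0` points modulo `p`. -/
lemma sum_not_disjoint {U W : Submodule K V} (h : ¬ Disjoint U W) (x y : V) (a : F) :
    ∑ u : U, (if x + u - y ∈ W then a else 0) = 0 := by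
  by_cases hu : ∃ u : U, x + u - y ∈ W
  · obtain ⟨u₀, hu₀⟩ := hu
    rw [← Equiv.sum_comp (Equiv.addRight u₀)]
    have h1 : ∀ u : U, (x + ((Equiv.addRight u₀ u : U) : V) - y ∈ W) ↔
        u ∈ W.comap U.subtype := by
      intro u
      have : x + ((Equiv.addRight u₀ u : U) : V) - y = u + (x + u₀ - y) := by
        simp; abel
      rw [this, Submodule.add_mem_iff_left _ hu₀]
      simp
    simp only [h1]
    rw [← Finset.sum_filter, Finset.sum_const, ← Fintype.card_subtype, nsmul_eq_mul]
    have h2 : Fintype.card {u : U // u ∈ W.comap U.subtype} =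
        Fintype.card K ^ finrank K (W.comap U.subtype) :=
      Module.card_eq_pow_finrank (K := K) (V := W.comap U.subtype)
    have h3 : finrank K (W.comap U.subtype) ≠ 0 := by
      intro h0
      apply h
      rw [Submodule.finrank_eq_zero] at h0
      rw [Submodule.disjoint_def]
      intro v hv hw
      have : (⟨v, hv⟩ : U) ∈ W.comap U.subtype := hw
      rw [h0, Submodule.mem_bot] at this
      exact congrArg Subtype.val this
    rw [h2, Nat.cast_pow, hq, zero_pow h3, zero_mul]
  · push Not at hu
    exact Finset.sum_eq_zero fun u _ => if_neg (hu u)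

end Sums

end EggDatum

/-! ### Linear conditions on codewords -/

namespace PointModel

open Module

set_option linter.unusedSectionVars false

variable {K V ι : Type*} [Field K] [Fintype K] [AddCommGroup V] [Module K V] [Fintype V]
  [Fintype ι] {n m : ℕ} {D : EggDatum K V ι n m} {X : Type*} (M : PointModel D X)
  {F : Type*} [Field F]

/-- The linear conditions on codewords that the proof uses; `a i` is the sum of the coefficients
of the affine lines with direction `E i`. The total `∑ i, a i + c pinf` is then the sum of all
coefficients. -/
structure Balanced (c : X → F) (a : ι → F) : Prop where
  /-- Sums over the affine subspaces of dimension `n + m`. -/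
  flat : ∀ U : Submodule K V, finrank K U = n + m → ∀ x,
    ∑ u : U, c (M.pa (x + u)) = ∑ i, if Disjoint (D.E i) U then a i else 0
  /-- Sums over the `q ^ n` points on an element `E i`, other than `pinf`. -/
  cls : ∀ i k, k ≠ i → ∀ x, ∑ u : D.E k, c (M.pw i (x + u)) = a i
  /-- Sums over the points collinear with the affine point `x`. The point `x` itself is counted
  `q ^ m + 1` times, which is once modulo `p`. -/
  star : ∀ x, ∑ i, (∑ u : D.E i, c (M.pa (x + u)) + c (M.pw i x)) = ∑ i, a i + c M.pinf

/-- `c` is `r` times the incidence vector of the affine line `y + E j`. -/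
def IsAffineLine (c : X → F) (r : F) (j : ι) (y : V) : Prop :=
  (∀ x, c (M.pa x) = if x - y ∈ D.E j then r else 0) ∧
  (∀ i x, c (M.pw i x) = if i = j ∧ x - y ∈ D.T j then r else 0) ∧ c M.pinf = 0

/-- `c` is `r` times the incidence vector of the line `E j` at infinity. -/
def IsLineAtInfinity (c : X → F) (r : F) (j : ι) : Prop :=
  (∀ x, c (M.pa x) = 0) ∧ (∀ i x, c (M.pw i x) = if i = j then r else 0) ∧ c M.pinf = r

variable {M}

lemma Balanced.zero : M.Balanced (0 : X → F) 0 := by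
  constructor <;> intros <;> simp

lemma Balanced.add {c c' : X → F} {a a' : ι → F} (h : M.Balanced c a) (h' : M.Balanced c' a') :
    M.Balanced (c + c') (a + a') := by
  constructor
  · intro U hU x
    simp only [Pi.add_apply, Finset.sum_add_distrib]
    rw [h.flat U hU, h'.flat U hU, ← Finset.sum_add_distrib]
    refine Finset.sum_congr rfl fun i _ => ?_
    split_ifs <;> simp
  · intro i k hk x
    simp only [Pi.add_apply, Finset.sum_add_distrib, h.cls i k hk, h'.cls i k hk]
  · intro x
    have h1 := h.star x
    have h2 := h'.star x
    simp only [Pi.add_apply, Finset.sum_add_distrib] at *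
    linear_combination h1 + h2

lemma Balanced.smul {c : X → F} {a : ι → F} (r : F) (h : M.Balanced c a) :
    M.Balanced (r • c) (r • a) := by
  constructor
  · intro U hU x
    simp only [Pi.smul_apply, smul_eq_mul, ← Finset.mul_sum]
    rw [h.flat U hU, Finset.mul_sum]
    refine Finset.sum_congr rfl fun i _ => ?_
    split_ifs <;> simp
  · intro i k hk x
    simp only [Pi.smul_apply, smul_eq_mul, ← Finset.mul_sum, h.cls i k hk]
  · intro x
    have h1 := h.star x
    simp only [Pi.smul_apply, smul_eq_mul, Finset.sum_add_distrib, ← Finset.mul_sum] at *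
    linear_combination r * h1

variable (hq : (Fintype.card K : F) = 0)

include hq

lemma card_index_cast (D : EggDatum K V ι n m) : (Fintype.card ι : F) = 1 := by
  rw [D.card_index]
  push_cast
  rw [hq, zero_pow (by have := D.one_le_m; omega), zero_add]

lemma card_E_cast (i : ι) : (Fintype.card (D.E i) : F) = 0 := by
  rw [D.card_E]
  push_cast
  rw [hq, zero_pow (by have := D.one_le_n; omega)]

/-- The star condition for an affine line is the defining property of generalised quadrangles: a
point off a line is collinear with exactly one point of that line. -/
lemma balanced_of_isAffineLine {c : X → F} {j : ι} {y : V} (h : M.IsAffineLine c 1 j y) :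
    M.Balanced c (fun i => if i = j then 1 else 0) := by
  obtain ⟨hf, hg, h0⟩ := h
  constructor
  · intro U hU x
    have h1 : (∑ i, if Disjoint (D.E i) U then (if i = j then (1 : F) else 0) else 0) =
        if Disjoint (D.E j) U then 1 else 0 := by
      rw [Finset.sum_eq_single j]
      · simp
      · intro i _ hi; simp [hi]
      · simp
    rw [h1]
    simp only [hf]
    split_ifs with hd
    · exact EggDatum.sum_isCompl (EggDatum.isCompl_of_disjoint hd.symm
        (by rw [hU, D.finrank_E]; omega) D) x y 1
    · exact EggDatum.sum_not_disjoint hq (fun h => hd h.symm) x y 1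
  · intro i k hk x
    simp only [hg]
    by_cases hi : i = j
    · subst hi
      simp only [true_and, if_true]
      exact EggDatum.sum_isCompl (D.isCompl_T hk) x y 1
    · simp [hi]
  · intro x
    simp only [hf, hg, h0, Finset.sum_add_distrib]
    have e1 : ∀ i, ∑ u : D.E i, (if x + u - y ∈ D.E j then (1 : F) else 0) =
        if i ≠ j ∧ x - y ∈ D.E i ⊔ D.E j then 1 else 0 := by
      intro i
      by_cases hi : i = j
      · subst hi
        rw [EggDatum.sum_not_disjoint hq (by rw [disjoint_self]; exact D.E_ne_bot i)]
        simp
      · rw [EggDatum.sum_disjoint (D.disjoint_E hi)]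
        simp [hi]
    have e2 : (∑ i, if i = j ∧ x - y ∈ D.T j then (1 : F) else 0) =
        if x - y ∈ D.T j then 1 else 0 := by
      rw [Finset.sum_eq_single j]
      · simp
      · intro i _ hi; simp [hi]
      · simp
    simp only [e1]
    rw [e2, add_zero, Finset.sum_ite_eq' Finset.univ j, if_pos (Finset.mem_univ j)]
    -- The point `x` is on the line, or collinear with its point at infinity only, or collinear with
    -- just one of its affine points.
    by_cases hE : x - y ∈ D.E j
    · rw [if_pos (D.E_le_T j hE)]
      have : ∀ i, (if i ≠ j ∧ x - y ∈ D.E i ⊔ D.E j then (1 : F) else 0) =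
          1 - if i = j then 1 else 0 := by
        intro i
        have : x - y ∈ D.E i ⊔ D.E j := Submodule.mem_sup_right hE
        by_cases hi : i = j <;> simp [hi, this]
      simp only [this, Finset.sum_sub_distrib]
      simp [card_index_cast hq D]
    · by_cases hT : x - y ∈ D.T j
      · rw [if_pos hT, Finset.sum_eq_zero, zero_add]
        intro i _
        rw [if_neg]
        rintro ⟨hi, hm⟩
        obtain ⟨u, hu, e, he, hue⟩ := Submodule.mem_sup.1 hm
        have h1 : u ∈ D.T j := by
          have : u = x - y - e := by grind
          rw [this]; exact sub_mem hT (D.E_le_T j he)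
        have h2 := Submodule.disjoint_def.1 (D.disjoint_T j i hi) u hu h1
        rw [h2, zero_add] at hue
        exact hE (hue ▸ he)
      · obtain ⟨i, hi, hm⟩ := D.exists_mem_sup j hT
        rw [if_neg hT, add_zero, Finset.sum_eq_single i]
        · rw [if_pos ⟨hi, hm⟩]
        · intro k _ hk
          rw [if_neg]
          rintro ⟨hkj, hm'⟩
          obtain ⟨u, hu, e, he, hue⟩ := Submodule.mem_sup.1 hm
          obtain ⟨u', hu', e', he', hue'⟩ := Submodule.mem_sup.1 hm'
          have h1 : u' = u + (e - e') := by grind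
          have h2 := Submodule.disjoint_def.1 (D.indep k i j hk hkj hi) u' hu'
            (h1 ▸ Submodule.add_mem_sup hu (sub_mem he he'))
          rw [h2, zero_add] at hue'
          exact hE (hue' ▸ he')
        · simp

/-- Lines at infinity have no affine points and contribute only to the total. -/
lemma balanced_of_isLineAtInfinity {c : X → F} {j : ι} (h : M.IsLineAtInfinity c 1 j) :
    M.Balanced c 0 := by
  obtain ⟨hf, hg, h0⟩ := h
  constructor
  · intro U hU x
    simp [hf]
  · intro i k hk x
    simp only [hg, Finset.sum_const, Finset.card_univ, nsmul_eq_mul]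
    rw [card_E_cast hq]; simp
  · intro x
    simp [hf, hg, h0]

omit hq

/-- The points collinear with the point `pw l x`. -/
def perp (M : PointModel D X) (l : ι) (x : V) : Set X :=
  {P | (∃ v, v - x ∈ D.T l ∧ P = M.pa v) ∨ (∃ v, P = M.pw l v) ∨ P = M.pinf}

lemma pa_mem_perp {l : ι} {x v : V} : M.pa v ∈ M.perp l x ↔ v - x ∈ D.T l := by
  constructor
  · rintro (⟨w, hw, h⟩ | ⟨w, h⟩ | h)
    · rwa [M.pa_inj h]
    · exact absurd h (M.pa_ne_pw _ _ _)
    · exact absurd h (M.pa_ne_pinf _)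
  · intro h; exact Or.inl ⟨v, h, rfl⟩

lemma pw_mem_perp {l i : ι} {x v : V} : M.pw i v ∈ M.perp l x ↔ i = l := by
  constructor
  · rintro (⟨w, hw, h⟩ | ⟨w, h⟩ | h)
    · exact absurd h.symm (M.pa_ne_pw _ _ _)
    · exact ((M.pw_eq _ _ _ _).1 h).1
    · exact absurd h (M.pw_ne_pinf _ _)
  · rintro rfl; exact Or.inr (Or.inl ⟨v, rfl⟩)

lemma pinf_mem_perp {l : ι} {x : V} : M.pinf ∈ M.perp l x := Or.inr (Or.inr rfl)

lemma pw_add (i : ι) (v : V) {t : V} (ht : t ∈ D.T i) : M.pw i (v + t) = M.pw i v := by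
  rw [M.pw_eq]; simpa using ht

section Balanced

variable {c : X → F} {a : ι → F} (h : M.Balanced c a)

include h

lemma Balanced.sum_T (l : ι) (x : V) :
    ∑ t : D.T l, c (M.pa (x + t)) = ∑ i, a i - a l := by
  rw [h.flat _ (D.finrank_T l), eq_sub_iff_add_eq]
  have : ∀ i, a i = (if Disjoint (D.E i) (D.T l) then a i else 0) + if i = l then a l else 0 := by
    intro i
    by_cases hi : i = l
    · subst hi
      rw [if_neg, if_pos rfl, zero_add]
      intro hd
      exact D.E_ne_bot i (disjoint_self.1 (hd.mono_right (D.E_le_T i)))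
    · rw [if_pos (D.disjoint_T l i hi), if_neg hi, add_zero]
  conv_rhs => rw [Finset.sum_congr rfl fun i _ => this i]
  rw [Finset.sum_add_distrib, Finset.sum_ite_eq' Finset.univ l, if_pos (Finset.mem_univ l)]

/-- The sum over the points collinear with `pw l x` is the total, like for every point. -/
lemma Balanced.sum_perp (l k : ι) (hk : k ≠ l) (x : V) :
    ∑ t : D.T l, c (M.pa (x + t)) + ∑ u : D.E k, c (M.pw l (x + u)) + c M.pinf =
      ∑ i, a i + c M.pinf := by
  rw [h.sum_T, h.cls l k hk]; ring

/-- If at most one point collinear with `pw l x` lies in the support, its coefficient is the total,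
since the sum over the points collinear with `pw l x` is. -/
lemma Balanced.eq_total_of_subsingleton (l : ι) (x : V)
    (hs : ∀ P ∈ M.perp l x, ∀ Q ∈ M.perp l x, c P ≠ 0 → c Q ≠ 0 → P = Q) {Z : X}
    (hZ : Z ∈ M.perp l x) (hcZ : c Z ≠ 0) : c Z = ∑ i, a i + c M.pinf := by
  obtain ⟨k, hk⟩ := D.exists_index_ne l
  have hz : ∀ P ∈ M.perp l x, P ≠ Z → c P = 0 := fun P hP hPZ => by
    by_contra hcP
    exact hPZ (hs P hP Z hZ hcP hcZ)
  rw [← h.sum_perp l k hk x]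
  rcases hZ with ⟨v, hv, rfl⟩ | ⟨v, rfl⟩ | rfl
  · rw [hz _ pinf_mem_perp (M.pa_ne_pinf v).symm, Finset.sum_eq_zero (s := Finset.univ (α := D.E k)),
      Finset.sum_eq_single ⟨v - x, hv⟩]
    · simp
    · intro t _ ht
      refine hz _ (pa_mem_perp.2 (by simp)) fun he => ht (Subtype.ext ?_)
      have := M.pa_inj he
      change (t : V) = v - x
      grind
    · simp
    · intro u _
      exact hz _ (pw_mem_perp.2 rfl) (M.pa_ne_pw _ _ _).symm
  · rw [hz _ pinf_mem_perp (M.pw_ne_pinf _ v).symm, Finset.sum_eq_zero (s := Finset.univ (α := D.T l))]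
    · obtain ⟨u, t, hut⟩ := Submodule.codisjoint_iff_exists_add_eq.1 (D.isCompl_T hk).codisjoint (v - x)
      obtain ⟨hu, ht, hut⟩ := hut
      rw [Finset.sum_eq_single ⟨u, hu⟩]
      · simp only [zero_add, add_zero]
        congr 1
        rw [M.pw_eq]
        refine ⟨rfl, ?_⟩
        have : v - (x + u) = t := by grind
        rwa [this]
      · intro b _ hb
        refine hz _ (pw_mem_perp.2 rfl) fun he => hb (Subtype.ext ?_)
        have h1 := ((M.pw_eq _ _ _ _).1 he).2
        have h2 : (b : V) - u ∈ D.T l := by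
          have : (b : V) - u = (x + b - v) + t := by grind
          rw [this]; exact add_mem h1 ht
        exact sub_eq_zero.1 (Submodule.disjoint_def.1 (D.disjoint_T l k hk) _ (sub_mem b.2 hu) h2)
      · simp
    · intro t _
      exact hz _ (pa_mem_perp.2 (by simp)) (M.pa_ne_pw _ _ _)
  · rw [Finset.sum_eq_zero, Finset.sum_eq_zero]
    · simp
    · intro t _
      exact hz _ (pw_mem_perp.2 rfl) (M.pw_ne_pinf _ _)
    · intro t _
      exact hz _ (pa_mem_perp.2 (by simp)) (M.pa_ne_pinf _)

end Balanced

end PointModel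

/-! ### The total of the coefficients -/

namespace PointModel

open Module

set_option linter.unusedSectionVars false

variable {K V ι : Type*} [Field K] [Fintype K] [AddCommGroup V] [Module K V] [Fintype V]
  [Fintype ι] {n m : ℕ} {D : EggDatum K V ι n m} {X : Type*} [Fintype X] {M : PointModel D X}
  {F : Type*} [Field F] (hq : (Fintype.card K : F) = 0)
  {c : X → F} {a : ι → F} (h : M.Balanced c a)
  (hs : (Finset.univ.filter fun P => c P ≠ 0).card = Fintype.card K ^ n + 1)

section

include hq h

/-- If the sum over the affine line `x + E l` is not the total, each affine point of that line is
collinear with a point of the support off the line. -/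
lemma Balanced.exists_neighbour (l : ι) (x : V)
    (hσ : ∑ u : D.E l, c (M.pa (x + u)) + c (M.pw l x) ≠ ∑ i, a i + c M.pinf) (y : D.E l) :
    ∃ i, i ≠ l ∧ ((∃ u ∈ D.E i, u ≠ 0 ∧ c (M.pa (x + y + u)) ≠ 0) ∨ c (M.pw i (x + y)) ≠ 0) := by
  by_contra hcon
  push Not at hcon
  apply hσ
  have hst := h.star (x + y)
  have h1 : ∀ i, i ≠ l → ∑ u : D.E i, c (M.pa (x + y + u)) + c (M.pw i (x + y)) =
      c (M.pa (x + y)) := by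
    intro i hi
    obtain ⟨h2, h3⟩ := hcon i hi
    rw [h3, add_zero, Finset.sum_eq_single 0]
    · simp
    · intro u _ hu
      exact h2 u u.2 (fun h0 => hu (Subtype.ext h0))
    · simp
  rw [← Finset.add_sum_erase _ _ (Finset.mem_univ l),
    Finset.sum_congr rfl (fun i hi => h1 i (Finset.ne_of_mem_erase hi)), Finset.sum_const,
    Finset.card_erase_of_mem (Finset.mem_univ l), Finset.card_univ, D.card_index,
    Nat.add_sub_cancel, nsmul_eq_mul] at hst
  push_cast at hst
  rw [hq, zero_pow (by have := D.one_le_m; omega), zero_mul, add_zero,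
    pw_add l x (D.E_le_T l y.2)] at hst
  rw [← hst]
  congr 1
  rw [← Equiv.sum_comp (Equiv.addLeft y)]
  refine Finset.sum_congr rfl fun u _ => ?_
  simp [add_assoc]

include hs

/-- If the sum over the affine line `x + E l` is not the total, the `q ^ n` affine points of that
line are collinear with distinct points of the support that are not collinear with `pw l x`.
Since the support has `q ^ n + 1` points, at most one is left to be collinear with `pw l x`. -/
lemma Balanced.subsingleton_perp (l : ι) (x : V)
    (hσ : ∑ u : D.E l, c (M.pa (x + u)) + c (M.pw l x) ≠ ∑ i, a i + c M.pinf) :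
    ∀ P ∈ M.perp l x, ∀ Q ∈ M.perp l x, c P ≠ 0 → c Q ≠ 0 → P = Q := by
  have key : ∀ y : D.E l, ∃ Z, c Z ≠ 0 ∧ ∃ i, i ≠ l ∧
      ((∃ u ∈ D.E i, u ≠ 0 ∧ Z = M.pa (x + y + u)) ∨ Z = M.pw i (x + y)) := by
    intro y
    obtain ⟨i, hi, ⟨u, hu, hu0, hc⟩ | hc⟩ := h.exists_neighbour hq l x hσ y
    · exact ⟨_, hc, i, hi, Or.inl ⟨u, hu, hu0, rfl⟩⟩
    · exact ⟨_, hc, i, hi, Or.inr rfl⟩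
  choose Z hZ i hi hZi using key
  have hinj : Function.Injective Z := by
    intro y y' he
    apply Subtype.ext
    rw [← sub_eq_zero]
    rcases hZi y with ⟨u, hu, hu0, h1⟩ | h1 <;> rcases hZi y' with ⟨u', hu', hu0', h1'⟩ | h1' <;>
      rw [h1, h1'] at he
    · have he := M.pa_inj he
      by_cases hii : i y = i y'
      · rw [← hii] at hu'
        have h2 : (y : V) - y' = u' - u := by grind
        exact Submodule.disjoint_def.1 (D.disjoint_E (hi y).symm) _ (sub_mem y.2 y'.2)
          (h2 ▸ sub_mem hu' hu)
      · have h2 : u = u' + (y' - y : V) := by grind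
        exact absurd (Submodule.disjoint_def.1 (D.indep _ _ l hii (hi y) (hi y')) u hu
          (h2 ▸ Submodule.add_mem_sup hu' (sub_mem y'.2 y.2))) hu0
    · exact absurd he (M.pa_ne_pw _ _ _)
    · exact absurd he.symm (M.pa_ne_pw _ _ _)
    · have h2 := ((M.pw_eq _ _ _ _).1 he).2
      have h3 : (y : V) - y' ∈ D.T (i y) := by simpa using h2
      exact Submodule.disjoint_def.1 (D.disjoint_T _ l (hi y).symm) _ (sub_mem y.2 y'.2) h3
  have hnot : ∀ y, Z y ∉ M.perp l x := by
    intro y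
    rcases hZi y with ⟨u, hu, hu0, h1⟩ | h1 <;> rw [h1]
    · rw [pa_mem_perp]
      intro hT
      have h2 : u ∈ D.T l := by
        have : u = (x + y + u - x) - y := by abel
        rw [this]; exact sub_mem hT (D.E_le_T l y.2)
      exact hu0 (Submodule.disjoint_def.1 (D.disjoint_T l _ (hi y)) u hu h2)
    · rw [pw_mem_perp]; exact hi y
  have h1 : Fintype.card K ^ n ≤
      ((Finset.univ.filter fun P => c P ≠ 0).filter fun P => ¬ P ∈ M.perp l x).card := by
    rw [← D.card_E l, ← Finset.card_univ, ← Finset.card_image_of_injective _ hinj]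
    apply Finset.card_le_card
    intro P hP
    obtain ⟨y, -, rfl⟩ := Finset.mem_image.1 hP
    simp [hZ y, hnot y]
  have h2 := Finset.card_filter_add_card_filter_not (s := Finset.univ.filter fun P => c P ≠ 0)
    (fun P => P ∈ M.perp l x)
  have h3 : ((Finset.univ.filter fun P => c P ≠ 0).filter fun P => P ∈ M.perp l x).card ≤ 1 := by
    omega
  intro P hP Q hQ hcP hcQ
  exact Finset.card_le_one.1 h3 P (by simp [hP, hcP]) Q (by simp [hQ, hcQ])

/-- The total of a codeword of weight `q ^ n + 1` is not zero: otherwise all affine line sums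
vanish, so every line through an affine point of the support carries a further point of the
support, which is too many. -/
lemma Balanced.total_ne_zero : ∑ i, a i + c M.pinf ≠ 0 := by
  intro hB
  have hσ : ∀ l x, ∑ u : D.E l, c (M.pa (x + u)) + c (M.pw l x) = 0 := by
    intro l x
    by_contra hne
    have hsub := h.subsingleton_perp hq hs l x (by rwa [hB])
    have h0 : ∀ Z ∈ M.perp l x, c Z = 0 := by
      intro Z hZ
      by_contra hcZ
      exact hcZ ((h.eq_total_of_subsingleton l x hsub hZ hcZ).trans hB)
    apply hne
    rw [h0 _ (pw_mem_perp.2 rfl), add_zero]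
    exact Finset.sum_eq_zero fun u _ => h0 _ (pa_mem_perp.2 (by simpa using D.E_le_T l u.2))
  by_cases hf : ∃ v, c (M.pa v) ≠ 0
  · obtain ⟨v, hv⟩ := hf
    have key : ∀ l, ∃ Z, c Z ≠ 0 ∧ ((∃ u ∈ D.E l, u ≠ 0 ∧ Z = M.pa (v + u)) ∨ Z = M.pw l v) := by
      intro l
      by_contra hcon
      push Not at hcon
      have h1 := hσ l v
      rw [Finset.sum_eq_single 0] at h1
      · by_cases hw : c (M.pw l v) = 0
        · rw [hw] at h1
          apply hv
          simpa using h1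
        · exact (hcon _ hw).2 rfl
      · intro u _ hu
        by_contra hcu
        exact (hcon _ hcu).1 u u.2 (fun h0 => hu (Subtype.ext h0)) rfl
      · simp
    choose Z hZ hZi using key
    have hinj : Function.Injective Z := by
      intro l l' he
      by_contra hl
      rcases hZi l with ⟨u, hu, hu0, h1⟩ | h1 <;> rcases hZi l' with ⟨u', hu', hu0', h1'⟩ | h1' <;>
        rw [h1, h1'] at he
      · have he := add_left_cancel (M.pa_inj he)
        exact hu0 (Submodule.disjoint_def.1 (D.disjoint_E hl) u hu (he ▸ hu'))
      · exact absurd he (M.pa_ne_pw _ _ _)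
      · exact absurd he.symm (M.pa_ne_pw _ _ _)
      · exact hl ((M.pw_eq _ _ _ _).1 he).1
    have hne : M.pa v ∉ Finset.univ.image Z := by
      intro hm
      obtain ⟨l, -, hl⟩ := Finset.mem_image.1 hm
      rcases hZi l with ⟨u, hu, hu0, h1⟩ | h1 <;> rw [h1] at hl
      · exact hu0 (by simpa using M.pa_inj hl)
      · exact absurd hl.symm (M.pa_ne_pw _ _ _)
    have h1 : (insert (M.pa v) (Finset.univ.image Z)).card ≤
        (Finset.univ.filter fun P => c P ≠ 0).card := by
      apply Finset.card_le_card
      intro P hP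
      rcases Finset.mem_insert.1 hP with rfl | hP
      · simp [hv]
      · obtain ⟨y, -, rfl⟩ := Finset.mem_image.1 hP
        simp [hZ y]
    rw [Finset.card_insert_of_notMem hne, Finset.card_image_of_injective _ hinj,
      Finset.card_univ, D.card_index, hs] at h1
    have := Nat.pow_le_pow_right (Fintype.card_pos (α := K)) D.n_le_m
    omega
  · push Not at hf
    have h1 : (Finset.univ.filter fun P => c P ≠ 0) ⊆ {M.pinf} := by
      intro P hP
      have hP : c P ≠ 0 := by simpa using hP
      rcases M.cover P with ⟨v, rfl⟩ | ⟨i, v, rfl⟩ | rfl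
      · exact absurd (hf v) hP
      · have := hσ i v
        simp only [hf, Finset.sum_const_zero, zero_add] at this
        exact absurd this hP
      · simp
    have h2 := Finset.card_le_card h1
    rw [hs, Finset.card_singleton] at h2
    have := Nat.one_le_pow n _ (Fintype.card_pos (α := K))
    omega

end

end PointModel

/-! ### Classification of the vectors of minimum weight -/

namespace PointModel

open Module

set_option linter.unusedSectionVars false

variable {K V ι : Type*} [Field K] [Fintype K] [AddCommGroup V] [Module K V] [Fintype V]
  [Fintype ι] {n m : ℕ} {D : EggDatum K V ι n m} {X : Type*} [Fintype X] {M : PointModel D X}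
  {F : Type*} [Field F] (hq : (Fintype.card K : F) = 0)
  {c : X → F} {a : ι → F} (h : M.Balanced c a)
  (hs : (Finset.univ.filter fun P => c P ≠ 0).card = Fintype.card K ^ n + 1)

lemma finrank_T_inf (D : EggDatum K V ι n m) {i j : ι} (hij : i ≠ j) :
    finrank K ↥(D.T i ⊓ D.T j) = m := by
  have h1 : D.T i ⊔ D.T j = ⊤ := by
    rw [eq_top_iff, ← (D.isCompl_T hij).sup_eq_top]
    exact sup_le_sup_right (D.E_le_T i) _
  have h2 := Submodule.finrank_sup_add_finrank_inf_eq (D.T i) (D.T j)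
  rw [h1, finrank_top, D.finrank_V, D.finrank_T, D.finrank_T] at h2
  omega

/-- A set of `q ^ n + 1` points contained in the support is the whole support. -/
lemma mem_of_card_le {s : Finset X} (hsub : ∀ P ∈ s, c P ≠ 0)
    (hs : (Finset.univ.filter fun P => c P ≠ 0).card ≤ s.card) {P : X} (hP : c P ≠ 0) : P ∈ s := by
  have : s = Finset.univ.filter fun P => c P ≠ 0 := by
    apply Finset.eq_of_subset_of_card_le _ hs
    intro P hP; simp [hsub P hP]
  rw [this]; simp [hP]

section

include h hs

/-- If the sum over some (hence every) translate of the `(n + m)`-dimensional `U` is not zero, then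
each of the `q ^ n` translates contains a point of the support. So there is room for just one more
point of the support, and each translate contains just one affine one. -/
lemma Balanced.transversal {U : Submodule K V} (hU : finrank K U = n + m)
    (hne : (∑ i, if Disjoint (D.E i) U then a i else 0) ≠ 0) {i₀ : ι} {v₀ : V}
    (h₀ : c (M.pw i₀ v₀) ≠ 0) :
    (∀ x y, c (M.pa x) ≠ 0 → c (M.pa y) ≠ 0 → x - y ∈ U → x = y) ∧
    (∀ i v, c (M.pw i v) ≠ 0 → M.pw i v = M.pw i₀ v₀) ∧ c M.pinf = 0 := by
  obtain ⟨C, hC⟩ := Submodule.exists_isCompl U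
  have hCn : finrank K C = n := by
    have := Submodule.finrank_add_eq_of_isCompl hC
    rw [D.finrank_V] at this; omega
  -- The translates of `U` are the `w + U` with `w` in a complement `C`.
  have key : ∀ w : C, ∃ u : U, c (M.pa (w + u)) ≠ 0 := by
    intro w
    by_contra hcon
    push Not at hcon
    apply hne
    rw [← h.flat U hU w]
    exact Finset.sum_eq_zero fun u _ => hcon u
  choose u hu using key
  have hdis : ∀ w w' : C, ((w : V) + u w) - (w' + u w') ∈ U → w = w' := by
    intro w w' hm
    apply Subtype.ext
    rw [← sub_eq_zero]
    refine Submodule.disjoint_def.1 hC.disjoint _ ?_ (sub_mem w.2 w'.2)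
    have : (w : V) - w' = ((w : V) + u w - (w' + u w')) - (u w - u w') := by abel
    rw [this]; exact sub_mem hm (sub_mem (u w).2 (u w').2)
  have hinj : Function.Injective fun w : C => M.pa (w + u w) := by
    intro w w' he
    apply hdis
    rw [M.pa_inj he, sub_self]; exact zero_mem _
  have hnot : M.pw i₀ v₀ ∉ Finset.univ.image fun w : C => M.pa (w + u w) := by
    intro hm
    obtain ⟨w, -, hw⟩ := Finset.mem_image.1 hm
    exact M.pa_ne_pw _ _ _ hw
  have hall : ∀ P, c P ≠ 0 → P = M.pw i₀ v₀ ∨ ∃ w : C, M.pa (w + u w) = P := by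
    intro P hP
    have := mem_of_card_le (s := insert (M.pw i₀ v₀) (Finset.univ.image fun w : C => M.pa (w + u w)))
      ?_ ?_ hP
    · simpa using this
    · intro Q hQ
      rcases Finset.mem_insert.1 hQ with rfl | hQ
      · exact h₀
      · obtain ⟨w, -, rfl⟩ := Finset.mem_image.1 hQ
        exact hu w
    · rw [hs, Finset.card_insert_of_notMem hnot, Finset.card_image_of_injective _ hinj,
        Finset.card_univ, Module.card_eq_pow_finrank (K := K) (V := C), hCn]
  refine ⟨fun x y hx hy hxy => ?_, fun i v hv => ?_, ?_⟩
  · rcases hall _ hx with hx | ⟨w, hw⟩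
    · exact absurd hx (M.pa_ne_pw _ _ _)
    rcases hall _ hy with hy | ⟨w', hw'⟩
    · exact absurd hy (M.pa_ne_pw _ _ _)
    have hw := M.pa_inj hw
    have hw' := M.pa_inj hw'
    rw [← hw, ← hw'] at hxy ⊢
    rw [hdis w w' hxy]
  · rcases hall _ hv with hv | ⟨w, hw⟩
    · exact hv
    · exact absurd hw (M.pa_ne_pw _ _ _)
  · by_contra hp
    rcases hall _ hp with hv | ⟨w, hw⟩
    · exact absurd hv.symm (M.pw_ne_pinf _ _)
    · exact absurd hw (M.pa_ne_pinf _)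

/-- If `a i ≠ 0`, some point `pw i v` is in the support: `a i` is a sum of their coefficients. -/
lemma Balanced.exists_pw (i : ι) (hi : a i ≠ 0) : ∃ v, c (M.pw i v) ≠ 0 := by
  obtain ⟨k, hk⟩ := D.exists_index_ne i
  by_contra hcon
  push Not at hcon
  apply hi
  rw [← h.cls i k hk 0]
  exact Finset.sum_eq_zero fun u _ => hcon _

include hq

/-- When some coefficient sum `a i₀` and some `(n + m)`-flat sum do not vanish, the affine part of
the support is a transversal of every complement of `E i₀`, so it lies in a coset of `E i₀`. -/
lemma Balanced.isAffineLine_of_flat {U : Submodule K V} (hU : finrank K U = n + m)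
    (hne : (∑ i, if Disjoint (D.E i) U then a i else 0) ≠ 0) {i₀ : ι} (hi₀ : a i₀ ≠ 0) :
    ∃ y, M.IsAffineLine c (a i₀) i₀ y := by
  obtain ⟨v₀, hv₀⟩ := h.exists_pw hs i₀ hi₀
  obtain ⟨-, hpw, hinf⟩ := h.transversal hs hU hne hv₀
  have ha : ∀ i, i ≠ i₀ → a i = 0 := by
    intro i hi
    by_contra hai
    obtain ⟨v, hv⟩ := h.exists_pw hs i hai
    exact hi ((M.pw_eq _ _ _ _).1 (hpw i v hv)).1
  have hsum : ∑ i, a i = a i₀ :=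
    Finset.sum_eq_single i₀ (fun i _ hi => ha i hi) (by simp)
  have hflat : ∀ W : Submodule K V, IsCompl W (D.E i₀) → finrank K W = n + m ∧
      (∑ i, if Disjoint (D.E i) W then a i else 0) = a i₀ := by
    intro W hW
    constructor
    · have := Submodule.finrank_add_eq_of_isCompl hW
      rw [D.finrank_V, D.finrank_E] at this; omega
    · rw [Finset.sum_eq_single i₀]
      · rw [if_pos hW.disjoint.symm]
      · intro i _ hi; rw [ha i hi, ite_self]
      · simp
  have hE : ∀ x y, c (M.pa x) ≠ 0 → c (M.pa y) ≠ 0 → x - y ∈ D.E i₀ := by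
    intro x y hx hy
    by_contra hxy
    -- Otherwise some complement of `E i₀` contains `x - y`, and a translate of it contains both
    -- `x` and `y`.
    have hd : Disjoint (Submodule.span K {x - y}) (D.E i₀) := by
      rw [disjoint_comm, Submodule.disjoint_span_singleton' (by
        intro h0; rw [h0] at hxy; exact hxy (zero_mem _))]
      exact hxy
    obtain ⟨W, hle, hW⟩ := hd.exists_isCompl
    obtain ⟨h1, h2⟩ := hflat W hW
    have h3 := (h.transversal hs h1 (by rw [h2]; exact hi₀) hv₀).1 x y hx hy
      (hle (Submodule.mem_span_singleton_self _))
    rw [h3, sub_self] at hxy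
    exact hxy (zero_mem _)
  obtain ⟨W, hW⟩ := Submodule.exists_isCompl (D.E i₀)
  obtain ⟨h1, h2⟩ := hflat W hW.symm
  have hex : ∃ y, c (M.pa y) ≠ 0 := by
    by_contra hcon
    push Not at hcon
    apply hi₀
    rw [← h2, ← h.flat W h1 0]
    exact Finset.sum_eq_zero fun u _ => hcon _
  obtain ⟨y, hy⟩ := hex
  have hval : ∀ x, c (M.pa x) = if x - y ∈ D.E i₀ then a i₀ else 0 := by
    intro x
    split_ifs with hx
    · rw [← h2, ← h.flat W h1 x, Finset.sum_eq_single 0]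
      · simp
      · intro u _ hu
        by_contra hcu
        have h3 := hE _ _ hcu hy
        have h4 : (u : V) ∈ D.E i₀ := by
          have : (u : V) = (x + u - y) - (x - y) := by abel
          rw [this]; exact sub_mem h3 hx
        exact hu (Subtype.ext (Submodule.disjoint_def.1 hW.disjoint _ h4 u.2))
      · simp
    · by_contra hcx
      exact hx (hE x y hcx hy)
  -- The star condition at `y` shows that the remaining point is the one on the line `y + E i₀`.
  have hpwy : c (M.pw i₀ y) = a i₀ := by
    have hst := h.star y
    rw [hinf, hsum, add_zero, ← Finset.add_sum_erase _ _ (Finset.mem_univ i₀)] at hst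
    have e1 : ∑ u : D.E i₀, c (M.pa (y + u)) = 0 := by
      have : ∀ u : D.E i₀, c (M.pa (y + u)) = a i₀ := by
        intro u; rw [hval, if_pos (by simp)]
      simp only [this, Finset.sum_const, Finset.card_univ, nsmul_eq_mul]
      rw [card_E_cast hq, zero_mul]
    have e2 : ∀ i ∈ Finset.univ.erase i₀,
        ∑ u : D.E i, c (M.pa (y + u)) + c (M.pw i y) = a i₀ := by
      intro i hi
      have hi := Finset.ne_of_mem_erase hi
      have : c (M.pw i y) = 0 := by
        by_contra hcon
        exact hi ((M.pw_eq _ _ _ _).1 (hpw i y hcon)).1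
      rw [this, add_zero, Finset.sum_eq_single 0]
      · rw [hval, if_pos (by simp)]
      · intro u _ hu
        rw [hval, if_neg]
        intro hm
        exact hu (Subtype.ext (Submodule.disjoint_def.1 (D.disjoint_E hi) _ u.2 (by simpa using hm)))
      · simp
    rw [Finset.sum_congr rfl e2, e1, Finset.sum_const,
      Finset.card_erase_of_mem (Finset.mem_univ i₀), Finset.card_univ, D.card_index,
      Nat.add_sub_cancel, nsmul_eq_mul] at hst
    push_cast at hst
    rw [hq, zero_pow (by have := D.one_le_m; omega)] at hst
    simpa using hst
  refine ⟨y, hval, fun i x => ?_, hinf⟩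
  have hy0 := hpw i₀ y (by rw [hpwy]; exact hi₀)
  split_ifs with hix
  · obtain ⟨rfl, hxy⟩ := hix
    rw [← hpwy, (M.pw_eq _ _ _ _).2 ⟨rfl, hxy⟩]
  · by_contra hcon
    have := hpw i x hcon
    rw [← hy0, M.pw_eq] at this
    obtain ⟨rfl, h4⟩ := this
    exact hix ⟨rfl, h4⟩

omit hq in
/-- If all sums over `(n + m)`-flats vanish, so do all the `a i`. Indeed the tangent spaces show
that the `a i` are equal; if they are not zero, the support has a point on each of the `q ^ m + 1`
elements `E i`, which forces `m = n`, and then the flat spanned by two egg elements has sum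
`(q ^ m - 1) a i = - a i`. -/
lemma Balanced.coeff_eq_zero (hq : (Fintype.card K : F) = 0)
    (hflat : ∀ U : Submodule K V, finrank K U = n + m →
      (∑ i, if Disjoint (D.E i) U then a i else 0) = 0) : ∀ i, a i = 0 := by
  by_contra hcon
  push Not at hcon
  obtain ⟨i₀, hi₀⟩ := hcon
  have hconst : ∀ i, a i = ∑ i, a i := by
    intro i
    have h1 := h.sum_T i 0
    rw [h.flat _ (D.finrank_T i), hflat _ (D.finrank_T i)] at h1
    exact (sub_eq_zero.1 h1.symm).symm
  have hne : ∀ i, a i ≠ 0 := by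
    intro i; rw [hconst i, ← hconst i₀]; exact hi₀
  choose v hv using fun i => h.exists_pw hs i (hne i)
  have hinj : Function.Injective fun i => M.pw i (v i) := fun i j he =>
    ((M.pw_eq _ _ _ _).1 he).1
  have h1 : (Finset.univ.image fun i => M.pw i (v i)).card ≤
      (Finset.univ.filter fun P => c P ≠ 0).card := by
    apply Finset.card_le_card
    intro P hP
    obtain ⟨i, -, rfl⟩ := Finset.mem_image.1 hP
    simp [hv i]
  rw [Finset.card_image_of_injective _ hinj, Finset.card_univ, D.card_index, hs,
    Nat.add_le_add_iff_right, Nat.pow_le_pow_iff_right D.two_le_card] at h1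
  have hnm : m = n := le_antisymm h1 D.n_le_m
  obtain ⟨j₀, hj₀⟩ := D.exists_index_ne i₀
  have h2 := hflat (D.E i₀ ⊔ D.E j₀) (by
    rw [EggDatum.finrank_sup (D.disjoint_E hj₀.symm), D.finrank_E, D.finrank_E, hnm])
  have h3 : ∀ i, (if Disjoint (D.E i) (D.E i₀ ⊔ D.E j₀) then a i else 0) =
      a i₀ - ((if i = i₀ then a i₀ else 0) + (if i = j₀ then a i₀ else 0)) := by
    intro i
    by_cases hi : i = i₀
    · subst hi
      rw [if_neg, if_pos rfl, if_neg hj₀.symm]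
      · ring
      · intro hd
        exact D.E_ne_bot i (disjoint_self.1 (hd.mono_right le_sup_left))
    · by_cases hj : i = j₀
      · subst hj
        rw [if_neg, if_pos rfl, if_neg hi]
        · ring
        · intro hd
          exact D.E_ne_bot i (disjoint_self.1 (hd.mono_right le_sup_right))
      · rw [if_pos (D.indep _ _ _ hi hj hj₀.symm), if_neg hi, if_neg hj, hconst i, ← hconst i₀]
        ring
  simp only [h3, Finset.sum_sub_distrib, Finset.sum_add_distrib, Finset.sum_const,
    Finset.card_univ, nsmul_eq_mul, card_index_cast hq D, Finset.sum_ite_eq', Finset.mem_univ,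
    if_true] at h2
  apply hi₀
  linear_combination -h2

/-- When all `a i` vanish the total is `c pinf ≠ 0`, and the support is a line through `pinf`. -/
lemma Balanced.isLineAtInfinity (ha : ∀ i, a i = 0) :
    ∃ j, M.IsLineAtInfinity c (c M.pinf) j := by
  have hB : ∑ i, a i + c M.pinf = c M.pinf := by simp [ha]
  have hb : c M.pinf ≠ 0 := hB ▸ h.total_ne_zero hq hs
  -- If the sum over a line through `pw l x` is not the total, then `pinf`, which is in the support,
  -- is the only point of the support collinear with `pw l x`.
  have hdich : ∀ l x, ∑ u : D.E l, c (M.pa (x + u)) + c (M.pw l x) ≠ c M.pinf →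
      ∀ P ∈ M.perp l x, P ≠ M.pinf → c P = 0 := by
    intro l x hσ P hP hne
    by_contra hcP
    exact hne (h.subsingleton_perp hq hs l x (by rwa [hB]) P hP _ pinf_mem_perp hcP hb)
  by_cases hf : ∃ v, c (M.pa v) ≠ 0
  · exfalso
    obtain ⟨v, hv⟩ := hf
    have hσ : ∀ i, ∀ t ∈ D.T i,
        ∑ u : D.E i, c (M.pa (v + t + u)) + c (M.pw i v) = c M.pinf := by
      intro i t ht
      by_contra hne
      rw [← pw_add i v ht] at hne
      exact hv (hdich i (v + t) hne _ (pa_mem_perp.2 (by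
        have : v - (v + t) = -t := by abel
        rw [this]; exact neg_mem ht)) (M.pa_ne_pinf v))
    -- If `pw i v` is not in the support, all `q ^ m` affine lines through it meet the support. They
    -- are the cosets of `E i` in `v + T i`, represented by the elements of `T i ⊓ T k`.
    have hclaim : ∀ i, c (M.pw i v) = 0 → m = n ∧
        ∀ P, c P ≠ 0 → P = M.pinf ∨ ∃ t ∈ D.T i, P = M.pa (v + t) := by
      intro i hi
      obtain ⟨k, hk⟩ := D.exists_index_ne i
      have key : ∀ t : ↥(D.T i ⊓ D.T k), ∃ u : D.E i, c (M.pa (v + t + u)) ≠ 0 := by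
        intro t
        by_contra hcon
        push Not at hcon
        apply hb
        rw [← hσ i t t.2.1, hi, add_zero]
        exact Finset.sum_eq_zero fun u _ => hcon u
      choose u hu using key
      have hinj : Function.Injective fun t : ↥(D.T i ⊓ D.T k) => M.pa (v + t + u t) := by
        intro t t' he
        have he : v + t + u t = v + t' + u t' := M.pa_inj he
        apply Subtype.ext
        rw [← sub_eq_zero]
        have h1 : (t : V) - t' = u t' - u t := by grind
        exact Submodule.disjoint_def.1 (D.disjoint_T k i hk.symm) _
          (h1 ▸ sub_mem (u t').2 (u t).2) (sub_mem t.2.2 t'.2.2)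
      have hnot : M.pinf ∉ Finset.univ.image fun t : ↥(D.T i ⊓ D.T k) => M.pa (v + t + u t) := by
        intro hm
        obtain ⟨t, -, ht⟩ := Finset.mem_image.1 hm
        exact M.pa_ne_pinf _ ht
      have hsub : ∀ P ∈ insert M.pinf
          (Finset.univ.image fun t : ↥(D.T i ⊓ D.T k) => M.pa (v + t + u t)), c P ≠ 0 := by
        intro P hP
        rcases Finset.mem_insert.1 hP with rfl | hP
        · exact hb
        · obtain ⟨t, -, rfl⟩ := Finset.mem_image.1 hP
          exact hu t
      have hcard : (insert M.pinf
          (Finset.univ.image fun t : ↥(D.T i ⊓ D.T k) => M.pa (v + t + u t))).card =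
          Fintype.card K ^ m + 1 := by
        rw [Finset.card_insert_of_notMem hnot, Finset.card_image_of_injective _ hinj,
          Finset.card_univ, Module.card_eq_pow_finrank (K := K) (V := ↥(D.T i ⊓ D.T k)),
          finrank_T_inf D hk.symm]
      have hmn : m = n := by
        refine le_antisymm ?_ D.n_le_m
        have h1 := Finset.card_le_card (t := Finset.univ.filter fun P => c P ≠ 0)
          (fun P hP => by simpa using hsub P hP)
        rwa [hcard, hs, Nat.add_le_add_iff_right,
          Nat.pow_le_pow_iff_right D.two_le_card] at h1
      refine ⟨hmn, fun P hP => ?_⟩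
      have h1 := mem_of_card_le hsub (by rw [hcard, hs, hmn]) hP
      rcases Finset.mem_insert.1 h1 with h1 | h1
      · exact Or.inl h1
      · obtain ⟨t, -, rfl⟩ := Finset.mem_image.1 h1
        exact Or.inr ⟨t + u t, add_mem t.2.1 (D.E_le_T i (u t).2), by rw [add_assoc]⟩
    have hex : ∃ i, c (M.pw i v) = 0 := by
      by_contra hcon
      push Not at hcon
      have hinj : Function.Injective fun i => M.pw i v := fun i j he =>
        ((M.pw_eq _ _ _ _).1 he).1
      have hnot : M.pinf ∉ Finset.univ.image fun i => M.pw i v := by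
        intro hm
        obtain ⟨t, -, ht⟩ := Finset.mem_image.1 hm
        exact M.pw_ne_pinf _ _ ht
      have h1 := Finset.card_le_card (s := insert M.pinf (Finset.univ.image fun i => M.pw i v))
        (t := Finset.univ.filter fun P => c P ≠ 0) (fun P hP => by
          rcases Finset.mem_insert.1 hP with rfl | hP
          · simpa using hb
          · obtain ⟨i, -, rfl⟩ := Finset.mem_image.1 hP
            simpa using hcon i)
      rw [Finset.card_insert_of_notMem hnot, Finset.card_image_of_injective _ hinj,
        Finset.card_univ, D.card_index, hs] at h1
      have := Nat.pow_le_pow_right (Fintype.card_pos (α := K)) D.n_le_m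
      omega
    obtain ⟨i, hi⟩ := hex
    obtain ⟨hmn, hi'⟩ := hclaim i hi
    obtain ⟨j, hj⟩ := D.exists_index_ne i
    have hj0 : c (M.pw j v) = 0 := by
      by_contra hcon
      rcases hi' _ hcon with h1 | ⟨t, -, h1⟩
      · exact M.pw_ne_pinf _ _ h1
      · exact M.pa_ne_pw _ _ _ h1.symm
    obtain ⟨-, hj'⟩ := hclaim j hj0
    -- The affine part of the support lies in `v + T i ⊓ T j`, so a flat complementary to
    -- `T i ⊓ T j` meets it in `v` only.
    obtain ⟨U, hU⟩ := Submodule.exists_isCompl (D.T i ⊓ D.T j)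
    have hUn : finrank K U = n + m := by
      have := Submodule.finrank_add_eq_of_isCompl hU
      rw [finrank_T_inf D hj.symm, D.finrank_V] at this
      omega
    have h1 := h.flat U hUn v
    rw [Finset.sum_eq_single 0] at h1
    · simp [ha] at h1
      exact hv h1
    · intro u _ hu
      by_contra hcu
      have aux : ∀ l, (∀ P, c P ≠ 0 → P = M.pinf ∨ ∃ t ∈ D.T l, P = M.pa (v + t)) →
          (u : V) ∈ D.T l := by
        intro l hl
        rcases hl _ hcu with h2 | ⟨t, ht, h2⟩
        · exact absurd h2 (M.pa_ne_pinf _)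
        · rw [add_left_cancel (M.pa_inj h2)]; exact ht
      exact hu (Subtype.ext (Submodule.disjoint_def.1 hU.disjoint _ ⟨aux i hi', aux j hj'⟩ u.2))
    · simp
  · push Not at hf
    have hex : ∃ i v, c (M.pw i v) ≠ 0 := by
      by_contra hcon
      push Not at hcon
      have h1 : (Finset.univ.filter fun P => c P ≠ 0) ⊆ {M.pinf} := by
        intro P hP
        have hP : c P ≠ 0 := by simpa using hP
        rcases M.cover P with ⟨v, rfl⟩ | ⟨i, v, rfl⟩ | rfl
        · exact absurd (hf v) hP
        · exact absurd (hcon i v) hP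
        · simp
      have h2 := Finset.card_le_card h1
      rw [hs, Finset.card_singleton] at h2
      have := Nat.one_le_pow n _ (Fintype.card_pos (α := K))
      omega
    obtain ⟨i, v, hv⟩ := hex
    -- The affine lines through `pw i x` have no affine point in the support, so their sum is
    -- `c (pw i x)`; if that is not the total, `pw i v` cannot be in the support.
    have hval : ∀ x, c (M.pw i x) = c M.pinf := by
      intro x
      by_contra hne
      exact hv (hdich i x (by simpa [hf] using hne) _ (pw_mem_perp.2 rfl) (M.pw_ne_pinf _ _))
    obtain ⟨k, hk⟩ := D.exists_index_ne i
    have hinj : Function.Injective fun u : D.E k => M.pw i (u : V) := by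
      intro u u' he
      apply Subtype.ext
      rw [← sub_eq_zero]
      exact Submodule.disjoint_def.1 (D.disjoint_T i k hk) _ (sub_mem u.2 u'.2)
        ((M.pw_eq _ _ _ _).1 he).2
    have hnot : M.pinf ∉ Finset.univ.image fun u : D.E k => M.pw i (u : V) := by
      intro hm
      obtain ⟨t, -, ht⟩ := Finset.mem_image.1 hm
      exact M.pw_ne_pinf _ _ ht
    refine ⟨i, hf, fun j x => ?_, rfl⟩
    split_ifs with hj
    · rw [hj, hval]
    · by_contra hcx
      have := mem_of_card_le (s := insert M.pinf (Finset.univ.image fun u : D.E k => M.pw i (u : V)))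
        ?_ ?_ hcx
      · rcases Finset.mem_insert.1 this with h1 | h1
        · exact M.pw_ne_pinf _ _ h1
        · obtain ⟨u, -, hu⟩ := Finset.mem_image.1 h1
          exact hj ((M.pw_eq _ _ _ _).1 hu).1.symm
      · intro P hP
        rcases Finset.mem_insert.1 hP with rfl | hP
        · exact hb
        · obtain ⟨u, -, rfl⟩ := Finset.mem_image.1 hP
          rw [hval]; exact hb
      · rw [Finset.card_insert_of_notMem hnot, Finset.card_image_of_injective _ hinj,
          Finset.card_univ, D.card_E, hs]

/-- A balanced vector of weight `q ^ n + 1` is a nonzero multiple of the incidence vector of a line,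
affine if some `a i` is not zero and at infinity if all are zero. -/
theorem Balanced.isLine : ∃ r ≠ 0, ∃ j,
    (∃ y, M.IsAffineLine c r j y) ∨ M.IsLineAtInfinity c r j := by
  by_cases ha : ∀ i, a i = 0
  · obtain ⟨j, hj⟩ := h.isLineAtInfinity hq hs ha
    refine ⟨c M.pinf, ?_, j, Or.inr hj⟩
    have := h.total_ne_zero hq hs
    simpa [ha] using this
  · by_cases hflat : ∀ U : Submodule K V, finrank K U = n + m →
        (∑ i, if Disjoint (D.E i) U then a i else 0) = 0
    · exact absurd (h.coeff_eq_zero hs hq hflat) ha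
    · push Not at ha hflat
      obtain ⟨i₀, hi₀⟩ := ha
      obtain ⟨U, hU, hne⟩ := hflat
      exact ⟨a i₀, hi₀, i₀, Or.inl (h.isAffineLine_of_flat hq hs hU hne hi₀)⟩

end

/-- An affine line consists of `q ^ n` affine points and one further point. -/
lemma card_of_isAffineLine {r : F} (hr : r ≠ 0) {j : ι} {y : V} (hc : M.IsAffineLine c r j y) :
    (Finset.univ.filter fun P => c P ≠ 0).card = Fintype.card K ^ n + 1 := by
  obtain ⟨hf, hg, h0⟩ := hc
  have hinj : Function.Injective fun u : D.E j => M.pa (y + u) := fun u u' he =>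
    Subtype.ext (add_left_cancel (M.pa_inj he))
  have hnot : M.pw j y ∉ Finset.univ.image fun u : D.E j => M.pa (y + u) := by
    intro hm
    obtain ⟨t, -, ht⟩ := Finset.mem_image.1 hm
    exact M.pa_ne_pw _ _ _ ht
  have : (Finset.univ.filter fun P => c P ≠ 0) =
      insert (M.pw j y) (Finset.univ.image fun u : D.E j => M.pa (y + u)) := by
    ext P
    simp only [Finset.mem_filter, Finset.mem_univ, true_and, Finset.mem_insert, Finset.mem_image]
    constructor
    · intro hP
      rcases M.cover P with ⟨v, rfl⟩ | ⟨i, v, rfl⟩ | rfl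
      · rw [hf] at hP
        exact Or.inr ⟨⟨v - y, by_contra fun hn => hP (if_neg hn)⟩, by simp⟩
      · rw [hg] at hP
        left
        have hn : i = j ∧ v - y ∈ D.T j := by_contra fun hn => hP (if_neg hn)
        obtain ⟨rfl, h1⟩ := hn
        exact (M.pw_eq _ _ _ _).2 ⟨rfl, h1⟩
      · exact absurd h0 hP
    · rintro (rfl | ⟨u, rfl⟩)
      · rw [hg, if_pos (by simp)]; exact hr
      · rw [hf, if_pos (by simp)]; exact hr
  rw [this, Finset.card_insert_of_notMem hnot, Finset.card_image_of_injective _ hinj,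
    Finset.card_univ, D.card_E]

/-- A line at infinity consists of `pinf` and the `q ^ n` points of one class `pw j`. -/
lemma card_of_isLineAtInfinity {r : F} (hr : r ≠ 0) {j : ι} (hc : M.IsLineAtInfinity c r j) :
    (Finset.univ.filter fun P => c P ≠ 0).card = Fintype.card K ^ n + 1 := by
  obtain ⟨hf, hg, h0⟩ := hc
  -- The cosets of `T j` are represented by the vectors of any other egg element `E k`.
  obtain ⟨k, hk⟩ := D.exists_index_ne j
  have hinj : Function.Injective fun u : D.E k => M.pw j (u : V) := by
    intro u u' he
    apply Subtype.ext
    rw [← sub_eq_zero]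
    exact Submodule.disjoint_def.1 (D.disjoint_T j k hk) _ (sub_mem u.2 u'.2)
      ((M.pw_eq _ _ _ _).1 he).2
  have hnot : M.pinf ∉ Finset.univ.image fun u : D.E k => M.pw j (u : V) := by
    intro hm
    obtain ⟨t, -, ht⟩ := Finset.mem_image.1 hm
    exact M.pw_ne_pinf _ _ ht
  have : (Finset.univ.filter fun P => c P ≠ 0) =
      insert M.pinf (Finset.univ.image fun u : D.E k => M.pw j (u : V)) := by
    ext P
    simp only [Finset.mem_filter, Finset.mem_univ, true_and, Finset.mem_insert, Finset.mem_image]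
    constructor
    · intro hP
      rcases M.cover P with ⟨v, rfl⟩ | ⟨i, v, rfl⟩ | rfl
      · exact absurd (hf v) hP
      · rw [hg] at hP
        have hij : i = j := by_contra fun hn => hP (if_neg hn)
        obtain ⟨u, t, hu, ht, hut⟩ :=
          Submodule.codisjoint_iff_exists_add_eq.1 (D.isCompl_T hk).codisjoint v
        refine Or.inr ⟨⟨u, hu⟩, ?_⟩
        rw [hij, ← hut, pw_add j u ht]
      · exact Or.inl rfl
    · rintro (rfl | ⟨u, rfl⟩)
      · rw [h0]; exact hr
      · rw [hg, if_pos rfl]; exact hr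
  rw [this, Finset.card_insert_of_notMem hnot, Finset.card_image_of_injective _ hinj,
    Finset.card_univ, D.card_E]

end PointModel

/-! ### From the projective description to affine coordinates -/

section Cone

open Module

variable {K W : Type*} [Field K] [AddCommGroup W] [Module K W]
  {H : Submodule K W} {φ : W →ₗ[K] K}

/-- The subspace spanned by `S ≤ H` and a vector `v` outside `H`, in terms of a linear form `φ` with
kernel `H` and `φ v = 1`. -/
lemma mem_cone (hφ : ∀ x, x ∈ H ↔ φ x = 0) {S : Submodule K W} (hS : S ≤ H) {v : W}
    (hv : φ v = 1) {x : W} : x ∈ S ⊔ K ∙ v ↔ x - φ x • v ∈ S := by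
  constructor
  · intro hx
    obtain ⟨d, hd, y, hy, rfl⟩ := Submodule.mem_sup.1 hx
    obtain ⟨a, rfl⟩ := Submodule.mem_span_singleton.1 hy
    have h1 := (hφ d).1 (hS hd)
    simpa [h1, hv] using hd
  · intro hx
    exact Submodule.mem_sup.2
      ⟨_, hx, _, Submodule.mem_span_singleton.2 ⟨φ x, rfl⟩, sub_add_cancel _ _⟩

lemma cone_inf (hφ : ∀ x, x ∈ H ↔ φ x = 0) {S : Submodule K W} (hS : S ≤ H) {v : W}
    (hv : φ v = 1) : (S ⊔ K ∙ v) ⊓ H = S := by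
  ext x
  rw [Submodule.mem_inf, mem_cone hφ hS hv]
  constructor
  · rintro ⟨h1, h2⟩
    simpa [(hφ x).1 h2] using h1
  · intro hx
    refine ⟨?_, hS hx⟩
    simpa [(hφ x).1 (hS hx)] using hx

lemma cone_le_cone (hφ : ∀ x, x ∈ H ↔ φ x = 0) {S S' : Submodule K W} (hS : S ≤ H) (hS' : S' ≤ H)
    {v v' : W} (hv : φ v = 1) (hv' : φ v' = 1) :
    S ⊔ K ∙ v ≤ S' ⊔ K ∙ v' ↔ S ≤ S' ∧ v - v' ∈ S' := by
  rw [sup_le_iff, Submodule.span_singleton_le_iff_mem, mem_cone hφ hS' hv', hv, one_smul]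
  refine and_congr_left fun _ => ⟨fun h x hx => ?_, fun h => h.trans le_sup_left⟩
  have := (mem_cone hφ hS' hv').1 (h hx)
  simpa [(hφ x).1 (hS hx)] using this

lemma le_cone (hφ : ∀ x, x ∈ H ↔ φ x = 0) {S S' : Submodule K W} (hS : S ≤ H) (hS' : S' ≤ H)
    {v' : W} (hv' : φ v' = 1) : S ≤ S' ⊔ K ∙ v' ↔ S ≤ S' := by
  refine ⟨fun h x hx => ?_, fun h => h.trans le_sup_left⟩
  have := (mem_cone hφ hS' hv').1 (h hx)
  simpa [(hφ x).1 (hS hx)] using this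

variable [FiniteDimensional K W]

lemma finrank_cone (hφ : ∀ x, x ∈ H ↔ φ x = 0) {S : Submodule K W} (hS : S ≤ H) {v : W}
    (hv : φ v = 1) : finrank K ↥(S ⊔ K ∙ v) = finrank K S + 1 := by
  have h0 : v ≠ 0 := by rintro rfl; simp at hv
  have h1 : S ⊓ K ∙ v = ⊥ := by
    rw [eq_bot_iff]
    rintro x ⟨hx, hxv⟩
    obtain ⟨a, rfl⟩ := Submodule.mem_span_singleton.1 hxv
    have := (hφ _).1 (hS hx)
    simp only [map_smul, hv, smul_eq_mul, mul_one] at this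
    simp [this]
  have h2 := Submodule.finrank_sup_add_finrank_inf_eq S (K ∙ v)
  rwa [h1, finrank_bot, finrank_span_singleton h0, add_zero] at h2

/-- A subspace meeting `H` in a subspace of codimension one in it is spanned by this intersection
and a vector outside `H`. -/
lemma exists_eq_cone (hφ : ∀ x, x ∈ H ↔ φ x = 0) {S U : Submodule K W} (hU : U ⊓ H = S)
    (hd : finrank K U = finrank K S + 1) : ∃ v, φ v = 1 ∧ U = S ⊔ K ∙ v := by
  have hex : ∃ x ∈ U, φ x ≠ 0 := by
    by_contra! hcon
    have : U ≤ H := fun x hx => (hφ x).2 (hcon x hx)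
    rw [inf_eq_left.2 this] at hU
    rw [hU] at hd
    omega
  obtain ⟨x, hx, hx0⟩ := hex
  have hv : φ ((φ x)⁻¹ • x) = 1 := by simp [hx0]
  have hS : S ≤ H := hU ▸ inf_le_right
  refine ⟨_, hv, (Submodule.eq_of_le_of_finrank_eq (sup_le (hU ▸ inf_le_left) ?_) ?_).symm⟩
  · rw [Submodule.span_singleton_le_iff_mem]
    exact U.smul_mem _ hx
  · rw [finrank_cone hφ hS hv, hd]

/-- A hyperplane is the kernel of a linear form. -/
lemma exists_linear_form (hH : finrank K H + 1 = finrank K W) :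
    ∃ (φ : W →ₗ[K] K) (v₀ : W), (∀ x, x ∈ H ↔ φ x = 0) ∧ φ v₀ = 1 := by
  have hlt : H < ⊤ := lt_top_iff_ne_top.2 fun h => by
    rw [h, finrank_top] at hH; omega
  obtain ⟨φ, h0, hle⟩ := Submodule.exists_le_ker_of_lt_top H hlt
  obtain ⟨x, hx⟩ : ∃ x, φ x ≠ 0 := by
    by_contra! hcon
    exact h0 (LinearMap.ext hcon)
  have h1 : finrank K (LinearMap.ker φ) < finrank K W := by
    apply Submodule.finrank_lt
    intro h
    exact hx (LinearMap.mem_ker.1 (h ▸ Submodule.mem_top))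
  have h2 : H = LinearMap.ker φ := Submodule.eq_of_le_of_finrank_le hle (by omega)
  refine ⟨φ, (φ x)⁻¹ • x, fun y => ?_, by simp [hx]⟩
  rw [h2, LinearMap.mem_ker]

end Cone

section Bridge

open Module

variable {K W : Type*} [Field K] [Fintype K] [AddCommGroup W] [Module K W]
  [FiniteDimensional K W] {n m : ℕ} {H : Submodule K W} {Egg : Set (Submodule K W)} [Fintype Egg]
  {TS : Submodule K W → Submodule K W}

/-- The affine data of an egg in the hyperplane `H`: the translations of the affine space are the
vectors of `H`. -/
def eggDatum (hn : 1 ≤ n) (hm : 1 ≤ m) (hH : finrank K H = 2 * n + m)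
    (hcard : Fintype.card Egg = Fintype.card K ^ m + 1)
    (hdim : ∀ E ∈ Egg, E ≤ H ∧ finrank K E = n)
    (hspan3 : ∀ E ∈ Egg, ∀ F ∈ Egg, ∀ G ∈ Egg, E ≠ F → E ≠ G → F ≠ G →
      finrank K ↥(E ⊔ F ⊔ G) = 3 * n)
    (hTS : ∀ E ∈ Egg, E ≤ TS E ∧ TS E ≤ H ∧ finrank K (TS E) = n + m ∧
      ∀ F ∈ Egg, F ≠ E → F ⊓ TS E = ⊥) : EggDatum K H Egg n m where
  E i := i.1.comap H.subtype
  T i := (TS i.1).comap H.subtype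
  one_le_n := hn
  one_le_m := hm
  card_index := hcard
  finrank_V := hH
  finrank_E i := by
    rw [← (hdim i.1 i.2).2]
    exact (Submodule.comapSubtypeEquivOfLe (hdim i.1 i.2).1).finrank_eq
  finrank_T i := by
    rw [← (hTS i.1 i.2).2.2.1]
    exact (Submodule.comapSubtypeEquivOfLe (hTS i.1 i.2).2.1).finrank_eq
  E_le_T i := Submodule.comap_mono (hTS i.1 i.2).1
  disjoint_T i j hij := by
    have := (hTS i.1 i.2).2.2.2 j.1 j.2 fun h => hij (Subtype.ext h)
    rw [Submodule.disjoint_def]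
    intro x hx hx'
    exact Subtype.ext ((Submodule.eq_bot_iff _).1 this x ⟨hx, hx'⟩)
  indep i j k hij hik hjk := by
    have h3 := hspan3 i.1 i.2 j.1 j.2 k.1 k.2 (fun h => hij (Subtype.ext h))
      (fun h => hik (Subtype.ext h)) fun h => hjk (Subtype.ext h)
    have h4 := Submodule.finrank_sup_add_finrank_inf_eq i.1 (j.1 ⊔ k.1)
    have h5 := Submodule.finrank_sup_add_finrank_inf_eq j.1 k.1
    rw [← sup_assoc, h3, (hdim _ i.2).2] at h4
    rw [(hdim _ j.2).2, (hdim _ k.2).2] at h5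
    have h6 : i.1 ⊓ (j.1 ⊔ k.1) = ⊥ := Submodule.finrank_eq_zero.1 (by omega)
    rw [Submodule.disjoint_def]
    intro x hx hx'
    refine Subtype.ext ((Submodule.eq_bot_iff _).1 h6 x ⟨hx, ?_⟩)
    obtain ⟨y, hy, z, hz, rfl⟩ := Submodule.mem_sup.1 hx'
    exact Submodule.add_mem_sup hy hz

omit [Fintype K] [FiniteDimensional K W] [Fintype Egg] in
/-- An egg element lies in no tangent space but its own. -/
lemma eq_of_le_tangent (hn : 1 ≤ n) (hdim : ∀ E ∈ Egg, E ≤ H ∧ finrank K E = n)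
    (hTS : ∀ E ∈ Egg, E ≤ TS E ∧ TS E ≤ H ∧ finrank K (TS E) = n + m ∧
      ∀ F ∈ Egg, F ≠ E → F ⊓ TS E = ⊥) {E F : Submodule K W} (hE : E ∈ Egg) (hF : F ∈ Egg)
    (h : F ≤ TS E) : F = E := by
  by_contra hne
  have h1 := (hTS E hE).2.2.2 F hF hne
  rw [inf_eq_left.2 h] at h1
  have h2 := (hdim F hF).2
  rw [h1, finrank_bot] at h2
  omega

omit [Fintype K] [FiniteDimensional K W] in
lemma form_add {φ : W →ₗ[K] K} {v₀ : W} (hφ : ∀ x, x ∈ H ↔ φ x = 0) (hv₀ : φ v₀ = 1) (h : H) :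
    φ (v₀ + h) = 1 := by
  rw [map_add, hv₀, (hφ _).1 h.2, add_zero]

omit [Fintype K] [FiniteDimensional K W] in
lemma add_ne_zero_of_form {φ : W →ₗ[K] K} {v₀ : W} (hφ : ∀ x, x ∈ H ↔ φ x = 0) (hv₀ : φ v₀ = 1)
    (h : H) : v₀ + (h : W) ≠ 0 := fun h0 => by
  have := form_add hφ hv₀ h
  simp [h0] at this

/-- The points of `T(E)` in the affine coordinates given by the choice of an origin `v₀` outside
the hyperplane `H = ker φ`: the vector `v` of `H` stands for the projective point `⟨v₀ + v⟩`. -/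
def pointModel (D : EggDatum K H Egg n m) (hDT : ∀ i, D.T i = (TS i.1).comap H.subtype)
    (hn : 1 ≤ n) (hdim : ∀ E ∈ Egg, E ≤ H ∧ finrank K E = n)
    (hTS : ∀ E ∈ Egg, E ≤ TS E ∧ TS E ≤ H ∧ finrank K (TS E) = n + m ∧
      ∀ F ∈ Egg, F ≠ E → F ⊓ TS E = ⊥)
    {φ : W →ₗ[K] K} {v₀ : W} (hφ : ∀ x, x ∈ H ↔ φ x = 0) (hv₀ : φ v₀ = 1) :
    PointModel D (({x : Projectivization K W // ¬ x.submodule ≤ H} ⊕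
      {U : Submodule K W // finrank K U = n + m + 1 ∧ ∃ e ∈ Egg, U ⊓ H = TS e}) ⊕ Unit) :=
  { pa := fun h => Sum.inl (Sum.inl ⟨Projectivization.mk K (v₀ + h) (add_ne_zero_of_form hφ hv₀ h), by
      rw [Projectivization.submodule_mk, Submodule.span_singleton_le_iff_mem, hφ, form_add hφ hv₀]
      exact one_ne_zero⟩)
    pw := fun i h => Sum.inl (Sum.inr ⟨TS i.1 ⊔ K ∙ (v₀ + (h : W)), by
      rw [finrank_cone hφ (hTS _ i.2).2.1 (form_add hφ hv₀ h), (hTS _ i.2).2.2.1],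
      i.1, i.2, cone_inf hφ (hTS _ i.2).2.1 (form_add hφ hv₀ h)⟩)
    pinf := Sum.inr ()
    pa_inj := by
      intro h h' he
      have he := congrArg Subtype.val (Sum.inl.inj (Sum.inl.inj he))
      obtain ⟨a, ha⟩ := (Projectivization.mk_eq_mk_iff' _ _ _ _ _).1 he
      have h1 := congrArg φ ha
      rw [map_smul, form_add hφ hv₀, form_add hφ hv₀, smul_eq_mul, mul_one] at h1
      rw [h1, one_smul] at ha
      exact (Subtype.ext (add_left_cancel ha)).symm
    pw_eq := by
      intro i j h h'
      have key : TS i.1 ⊔ K ∙ (v₀ + (h : W)) = TS j.1 ⊔ K ∙ (v₀ + (h' : W)) ↔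
          i = j ∧ h - h' ∈ D.T i := by
        rw [hDT, Submodule.mem_comap]
        constructor
        · intro he
          have h1 := congrArg (· ⊓ H) he
          simp only [cone_inf hφ (hTS _ i.2).2.1 (form_add hφ hv₀ h), cone_inf hφ (hTS _ j.2).2.1 (form_add hφ hv₀ h')] at h1
          have h2 : i = j := Subtype.ext
            (eq_of_le_tangent hn hdim hTS j.2 i.2 (h1 ▸ (hTS _ i.2).1))
          subst h2
          have := ((cone_le_cone hφ (hTS _ i.2).2.1 (hTS _ i.2).2.1 (form_add hφ hv₀ h) (form_add hφ hv₀ h')).1 he.le).2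
          exact ⟨rfl, by simpa using this⟩
        · rintro ⟨rfl, h1⟩
          apply le_antisymm
          · rw [cone_le_cone hφ (hTS _ i.2).2.1 (hTS _ i.2).2.1 (form_add hφ hv₀ h) (form_add hφ hv₀ h')]
            exact ⟨le_rfl, by simpa using h1⟩
          · rw [cone_le_cone hφ (hTS _ i.2).2.1 (hTS _ i.2).2.1 (form_add hφ hv₀ h') (form_add hφ hv₀ h)]
            exact ⟨le_rfl, by simpa using neg_mem h1⟩
      rw [← key]
      exact ⟨fun he => congrArg Subtype.val (Sum.inr.inj (Sum.inl.inj he)),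
        fun he => congrArg (fun P => Sum.inl (Sum.inr P)) (Subtype.ext he)⟩
    pa_ne_pw := fun _ _ _ he => nomatch Sum.inl.inj he
    pa_ne_pinf := fun _ he => nomatch he
    pw_ne_pinf := fun _ _ he => nomatch he
    cover := by
      have hsub (v : W) (h : φ v = 1) : v - v₀ ∈ H := by rw [hφ, map_sub, h, hv₀, sub_self]
      rintro ((⟨x, hx⟩ | ⟨U, hU, e, he, hUe⟩) | ⟨⟩)
      · left
        induction x with | h w hw =>
        rw [Projectivization.submodule_mk, Submodule.span_singleton_le_iff_mem, hφ] at hx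
        refine ⟨⟨(φ w)⁻¹ • w - v₀, hsub _ (by simp [hx])⟩, ?_⟩
        refine congrArg (fun P => Sum.inl (Sum.inl P)) (Subtype.ext ?_)
        rw [Projectivization.mk_eq_mk_iff']
        exact ⟨φ w, by simp [hx]⟩
      · right; left
        obtain ⟨v, hv1, rfl⟩ := exists_eq_cone hφ hUe (by rw [hU, (hTS e he).2.2.1])
        refine ⟨⟨e, he⟩, ⟨v - v₀, hsub v hv1⟩, ?_⟩
        refine congrArg (fun P => Sum.inl (Sum.inr P)) (Subtype.ext ?_)
        simp
      · exact Or.inr (Or.inr rfl) }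

/-- Incidence of the points and lines of `T(E)`; the lines are the `n`-spaces of the projective
space meeting `H` in an element of the egg, and the egg elements themselves. -/
def incidence (H : Submodule K W) (Egg : Set (Submodule K W))
    (TS : Submodule K W → Submodule K W) (n m : ℕ) :
    (({x : Projectivization K W // ¬ x.submodule ≤ H} ⊕
      {U : Submodule K W // finrank K U = n + m + 1 ∧ ∃ e ∈ Egg, U ⊓ H = TS e}) ⊕ Unit) →
    ({U : Submodule K W // finrank K U = n + 1 ∧ U ⊓ H ∈ Egg} ⊕
      {e : Submodule K W // e ∈ Egg}) → Prop
  | Sum.inl (Sum.inl x), Sum.inl U => x.1.submodule ≤ U.1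
  | Sum.inl (Sum.inl _), Sum.inr _ => False
  | Sum.inl (Sum.inr U), Sum.inl L => L.1 ≤ U.1
  | Sum.inl (Sum.inr U), Sum.inr e => e.1 ≤ U.1
  | Sum.inr _, Sum.inl _ => False
  | Sum.inr _, Sum.inr _ => True

section

variable {D : EggDatum K H Egg n m} {hDT : ∀ i, D.T i = (TS i.1).comap H.subtype}
  {hn : 1 ≤ n} {hdim : ∀ E ∈ Egg, E ≤ H ∧ finrank K E = n}
  {hTS : ∀ E ∈ Egg, E ≤ TS E ∧ TS E ≤ H ∧ finrank K (TS E) = n + m ∧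
    ∀ F ∈ Egg, F ≠ E → F ⊓ TS E = ⊥}
  {φ : W →ₗ[K] K} {v₀ : W} {hφ : ∀ x, x ∈ H ↔ φ x = 0} {hv₀ : φ v₀ = 1} {F : Type*} [Field F]

/-- The line spanned by the egg element `j` and the affine point `y`. -/
lemma isAffineLine_cone (hDE : ∀ i, D.E i = i.1.comap H.subtype) (r : F) (j : Egg) (y : H)
    (hU : finrank K ↥(j.1 ⊔ K ∙ (v₀ + (y : W))) = n + 1 ∧ (j.1 ⊔ K ∙ (v₀ + (y : W))) ⊓ H ∈ Egg) :
    (pointModel D hDT hn hdim hTS hφ hv₀).IsAffineLine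
      (r • fun P => if incidence H Egg TS n m P (Sum.inl ⟨_, hU⟩) then (1 : F) else 0) r j y := by
  refine ⟨fun x => ?_, fun i x => ?_, ?_⟩
  · have h1 : incidence H Egg TS n m ((pointModel D hDT hn hdim hTS hφ hv₀).pa x)
        (Sum.inl ⟨_, hU⟩) ↔ x - y ∈ D.E j := by
      simp only [pointModel, incidence, Projectivization.submodule_mk,
        Submodule.span_singleton_le_iff_mem]
      rw [mem_cone hφ (hdim _ j.2).1 (form_add hφ hv₀ y), form_add hφ hv₀, hDE]
      simp
    simp [h1]
  · have h1 : incidence H Egg TS n m ((pointModel D hDT hn hdim hTS hφ hv₀).pw i x)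
        (Sum.inl ⟨_, hU⟩) ↔ i = j ∧ x - y ∈ D.T j := by
      simp only [pointModel, incidence]
      rw [cone_le_cone hφ (hdim _ j.2).1 (hTS _ i.2).2.1 (form_add hφ hv₀ y)
        (form_add hφ hv₀ x), hDT]
      constructor
      · rintro ⟨h1, h2⟩
        have h3 : i = j := (Subtype.ext (eq_of_le_tangent hn hdim hTS i.2 j.2 h1)).symm
        subst h3
        exact ⟨rfl, by simpa using neg_mem h2⟩
      · rintro ⟨rfl, h2⟩
        exact ⟨(hTS _ i.2).1, by simpa using neg_mem h2⟩
    simp [h1]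
  · have h1 : ¬ incidence H Egg TS n m (pointModel D hDT hn hdim hTS hφ hv₀).pinf
        (Sum.inl ⟨_, hU⟩) := id
    simp [h1]

/-- The line given by the egg element `j` itself. -/
lemma isLineAtInfinity_inr (r : F) (j : Egg) :
    (pointModel D hDT hn hdim hTS hφ hv₀).IsLineAtInfinity
      (r • fun P => if incidence H Egg TS n m P (Sum.inr j) then (1 : F) else 0) r j := by
  refine ⟨fun x => ?_, fun i x => ?_, ?_⟩
  · have h1 : ¬ incidence H Egg TS n m ((pointModel D hDT hn hdim hTS hφ hv₀).pa x)
        (Sum.inr j) := id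
    simp [h1]
  · have h1 : incidence H Egg TS n m ((pointModel D hDT hn hdim hTS hφ hv₀).pw i x)
        (Sum.inr j) ↔ i = j := by
      simp only [pointModel, incidence]
      rw [le_cone hφ (hdim _ j.2).1 (hTS _ i.2).2.1 (form_add hφ hv₀ x)]
      exact ⟨fun h => (Subtype.ext (eq_of_le_tangent hn hdim hTS i.2 j.2 h)).symm,
        fun h => h ▸ (hTS _ i.2).1⟩
    simp [h1]
  · have h1 : incidence H Egg TS n m (pointModel D hDT hn hdim hTS hφ hv₀).pinf
        (Sum.inr j) := trivial
    simp [h1]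

variable (hdim hφ hv₀)

omit [Fintype K] [Fintype Egg] in
include hdim hφ hv₀ in
lemma exists_eq_cone_of_line {U : Submodule K W} (hU : finrank K U = n + 1 ∧ U ⊓ H ∈ Egg) :
    ∃ (j : Egg) (y : H), U = j.1 ⊔ K ∙ (v₀ + (y : W)) := by
  obtain ⟨v, hv, he⟩ := exists_eq_cone hφ rfl (by rw [hU.1, (hdim _ hU.2).2])
  refine ⟨⟨_, hU.2⟩, ⟨v - v₀, by rw [hφ, map_sub, hv, hv₀, sub_self]⟩, ?_⟩
  simpa using he

omit [Fintype K] [Fintype Egg] in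
include hdim hφ hv₀ in
lemma cone_isLine (j : Egg) (y : H) :
    finrank K ↥(j.1 ⊔ K ∙ (v₀ + (y : W))) = n + 1 ∧ (j.1 ⊔ K ∙ (v₀ + (y : W))) ⊓ H ∈ Egg := by
  have := form_add hφ hv₀ y
  rw [finrank_cone hφ (hdim _ j.2).1 this, cone_inf hφ (hdim _ j.2).1 this, (hdim _ j.2).2]
  exact ⟨rfl, j.2⟩

end

end Bridge

namespace PointModel

variable {K V ι : Type*} [Field K] [Fintype K] [AddCommGroup V] [Module K V] [Fintype ι] {n m : ℕ}
  {D : EggDatum K V ι n m} {X : Type*} {M : PointModel D X} {F : Type*} [Field F]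
  {c c' : X → F} {r : F} {j : ι} {y : V}

lemma IsAffineLine.unique (h : M.IsAffineLine c r j y) (h' : M.IsAffineLine c' r j y) : c = c' := by
  funext P
  rcases M.cover P with ⟨v, rfl⟩ | ⟨i, v, rfl⟩ | rfl
  · rw [h.1, h'.1]
  · rw [h.2.1, h'.2.1]
  · rw [h.2.2, h'.2.2]

lemma IsLineAtInfinity.unique (h : M.IsLineAtInfinity c r j) (h' : M.IsLineAtInfinity c' r j) :
    c = c' := by
  funext P
  rcases M.cover P with ⟨v, rfl⟩ | ⟨i, v, rfl⟩ | rfl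
  · rw [h.1, h'.1]
  · rw [h.2.1, h'.2.1]
  · rw [h.2.2, h'.2.2]

end PointModel

/-! ### The minimum weight codewords -/

/-- The minimum weight (weight `s + 1 = q^n + 1`) codewords of the `p`-ary code of
points and lines of the translation generalised quadrangle `T(E)` of order
`(q^n, q^m)`, `q = p^h` with `p` prime, are exactly the nonzero scalar multiples of
the incidence vectors of the lines of `T(E)`. -/
theorem TE_code_minimum_weight_codewords
    (p h n m : ℕ) (hp : p.Prime) (hh : 1 ≤ h) (hn : 1 ≤ n) (hm : 1 ≤ m)
    (K : Type*) [Field K] [Fintype K] (hK : Fintype.card K = p ^ h)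
    (H : Submodule K (Fin (2 * n + m + 1) → K))
    (hH : Module.finrank K H = 2 * n + m)
    (Egg : Set (Submodule K (Fin (2 * n + m + 1) → K)))
    (hcard : Nat.card Egg = p ^ (h * m) + 1)
    (hdim : ∀ E ∈ Egg, E ≤ H ∧ Module.finrank K E = n)
    (hspan3 : ∀ E ∈ Egg, ∀ F ∈ Egg, ∀ G ∈ Egg, E ≠ F → E ≠ G → F ≠ G →
      Module.finrank K ↥(E ⊔ F ⊔ G) = 3 * n)
    (TS : Submodule K (Fin (2 * n + m + 1) → K) → Submodule K (Fin (2 * n + m + 1) → K))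
    (hTS : ∀ E ∈ Egg, E ≤ TS E ∧ TS E ≤ H ∧ Module.finrank K (TS E) = n + m ∧
      ∀ F ∈ Egg, F ≠ E → F ⊓ TS E = ⊥) :
    ∀ I : (({x : Projectivization K (Fin (2 * n + m + 1) → K) // ¬ x.submodule ≤ H} ⊕ {W : Submodule K (Fin (2 * n + m + 1) → K) // Module.finrank K W = n + m + 1 ∧ ∃ e ∈ Egg, W ⊓ H = TS e}) ⊕ Unit) → ({W : Submodule K (Fin (2 * n + m + 1) → K) // Module.finrank K W = n + 1 ∧ W ⊓ H ∈ Egg} ⊕ {e : Submodule K (Fin (2 * n + m + 1) → K) // e ∈ Egg}) → Prop,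
      I = (fun P l =>
        match P, l with
        | Sum.inl (Sum.inl x), Sum.inl W => x.1.submodule ≤ W.1
        | Sum.inl (Sum.inl _), Sum.inr _ => False
        | Sum.inl (Sum.inr W), Sum.inl U => U.1 ≤ W.1
        | Sum.inl (Sum.inr W), Sum.inr e => e.1 ≤ W.1
        | Sum.inr _, Sum.inl _ => False
        | Sum.inr _, Sum.inr _ => True) →
      ∀ c ∈ Submodule.span (ZMod p)
          {v : (({x : Projectivization K (Fin (2 * n + m + 1) → K) // ¬ x.submodule ≤ H} ⊕ {W : Submodule K (Fin (2 * n + m + 1) → K) // Module.finrank K W = n + m + 1 ∧ ∃ e ∈ Egg, W ⊓ H = TS e}) ⊕ Unit) → ZMod p | ∃ l : ({W : Submodule K (Fin (2 * n + m + 1) → K) // Module.finrank K W = n + 1 ∧ W ⊓ H ∈ Egg} ⊕ {e : Submodule K (Fin (2 * n + m + 1) → K) // e ∈ Egg}), v = fun P => if I P l then 1 else 0},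
        (Nat.card {P : (({x : Projectivization K (Fin (2 * n + m + 1) → K) // ¬ x.submodule ≤ H} ⊕ {W : Submodule K (Fin (2 * n + m + 1) → K) // Module.finrank K W = n + m + 1 ∧ ∃ e ∈ Egg, W ⊓ H = TS e}) ⊕ Unit) // c P ≠ 0} = p ^ (h * n) + 1 ↔
          ∃ (lam : ZMod p) (l : ({W : Submodule K (Fin (2 * n + m + 1) → K) // Module.finrank K W = n + 1 ∧ W ⊓ H ∈ Egg} ⊕ {e : Submodule K (Fin (2 * n + m + 1) → K) // e ∈ Egg})), lam ≠ 0 ∧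
            c = lam • fun P => if I P l then (1 : ZMod p) else 0) := by
  intro I hI c hc
  have hfact : Fact p.Prime := ⟨hp⟩
  have hW : Finite (Fin (2 * n + m + 1) → K) := inferInstance
  have : Finite (Submodule K (Fin (2 * n + m + 1) → K)) :=
    Finite.of_injective _ SetLike.coe_injective
  have : Finite (Projectivization K (Fin (2 * n + m + 1) → K)) := by
    unfold Projectivization; infer_instance
  let _ : Fintype Egg := Fintype.ofFinite _
  let _ : Fintype H := Fintype.ofFinite _
  let _ := Fintype.ofFinite
    (({x : Projectivization K (Fin (2 * n + m + 1) → K) // ¬ x.submodule ≤ H} ⊕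
      {W : Submodule K (Fin (2 * n + m + 1) → K) // Module.finrank K W = n + m + 1 ∧
        ∃ e ∈ Egg, W ⊓ H = TS e}) ⊕ Unit)
  have hq : (Fintype.card K : ZMod p) = 0 := by
    rw [hK, Nat.cast_pow, ZMod.natCast_self, zero_pow (by omega)]
  have hcard' : Fintype.card Egg = Fintype.card K ^ m + 1 := by
    rw [← Nat.card_eq_fintype_card, hcard, hK, pow_mul]
  obtain ⟨φ, v₀, hφ, hv₀⟩ := exists_linear_form (H := H) (by rw [hH]; simp)
  let D := eggDatum hn hm hH hcard' hdim hspan3 hTS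
  let M := pointModel D (fun _ => rfl) hn hdim hTS hφ hv₀
  have hinc : I = incidence H Egg TS n m := by
    rw [hI]
    funext P l
    rcases P with (P | P) | P <;> rcases l with l | l <;> rfl
  subst hinc
  -- Every line of `T(E)` is an affine line or a line at infinity of the point model.
  have hline : ∀ (r : ZMod p) l,
      (∃ j y, M.IsAffineLine
        (r • fun P => if incidence H Egg TS n m P l then (1 : ZMod p) else 0) r j y) ∨
      ∃ j, M.IsLineAtInfinity
        (r • fun P => if incidence H Egg TS n m P l then (1 : ZMod p) else 0) r j := by
    rintro r (⟨U, hU⟩ | e)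
    · obtain ⟨j, y, rfl⟩ := exists_eq_cone_of_line hdim hφ hv₀ hU
      exact Or.inl ⟨j, y, isAffineLine_cone (fun _ => rfl) r j y hU⟩
    · exact Or.inr ⟨e, isLineAtInfinity_inr r e⟩
  have hbal : ∃ a, M.Balanced c a := by
    induction hc using Submodule.span_induction with
    | mem v hv =>
      obtain ⟨l, rfl⟩ := hv
      have := hline 1 l
      simp only [one_smul] at this
      rcases this with ⟨j, y, h⟩ | ⟨j, h⟩
      · exact ⟨_, PointModel.balanced_of_isAffineLine hq h⟩
      · exact ⟨_, PointModel.balanced_of_isLineAtInfinity hq h⟩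
    | zero => exact ⟨_, PointModel.Balanced.zero⟩
    | add x y _ _ hx hy =>
      obtain ⟨a, ha⟩ := hx
      obtain ⟨b, hb⟩ := hy
      exact ⟨_, ha.add hb⟩
    | smul r x _ hx =>
      obtain ⟨a, ha⟩ := hx
      exact ⟨_, ha.smul r⟩
  have hwt : p ^ (h * n) = Fintype.card K ^ n := by rw [hK, pow_mul]
  rw [Nat.card_eq_fintype_card, Fintype.card_subtype, hwt]
  constructor
  · intro hs
    obtain ⟨a, ha⟩ := hbal
    obtain ⟨r, hr, j, ⟨y, hy⟩ | hj⟩ := ha.isLine hq (by convert hs)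
    · exact ⟨r, Sum.inl ⟨_, cone_isLine hdim hφ hv₀ j y⟩, hr,
        hy.unique (isAffineLine_cone (fun _ => rfl) r j y _)⟩
    · exact ⟨r, Sum.inr j, hr, hj.unique (isLineAtInfinity_inr r j)⟩
  · rintro ⟨r, l, hr, rfl⟩
    rcases hline r l with ⟨j, y, h⟩ | ⟨j, h⟩
    · convert PointModel.card_of_isAffineLine hr h
    · convert PointModel.card_of_isLineAtInfinity hr h
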